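/- Let ρ : [0,2π] → ℝ⁺ be a probability density with ρ_min := min_{θ∈[0,2π]} ρ(θ) > 0, and let K^(ρ) be Kac's walk on SO(n) with angle density ρ. Then for every integer n ≥ 2 and all probability measures μ, ν on SO(n), W_{D,2}(μK^(ρ), νK^(ρ)) ≤ √(1 − 2π·ρ_min/C(n,2)) · W_{D,2}(μ, ν). -/

import Mathlib

open MeasureTheory ENNReal Filter Topology Matrix

noncomputable section

/-- The (Borel) product measurable structure on matrices. -/
instance matrixMeasurableSpace {m n R : Type*} [MeasurableSpace R] :
    MeasurableSpace (Matrix m n R) :=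
  (inferInstance : MeasurableSpace (m → n → R))

/-- `η` is a coupling of `μ` and `ν`: its two marginals are `μ` and `ν`. -/
def IsCoupling {X : Type*} [MeasurableSpace X] (η : Measure (X × X)) (μ ν : Measure X) : Prop :=
  η.map Prod.fst = μ ∧ η.map Prod.snd = ν

/-- The `L^p` transportation cost (Wasserstein) distance associated with the distance
function `d`, with values in `ℝ≥0∞`:
`W_{d,p}(μ,ν) = inf { (∫ d(x,y)^p dη)^{1/p} : η a coupling of (μ,ν) }`. -/
def wassersteinE {X : Type*} [MeasurableSpace X] (d : X → X → ℝ≥0∞) (p : ℝ)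
    (μ ν : Measure X) : ℝ≥0∞ :=
  ⨅ (η : Measure (X × X)) (_ : IsCoupling η μ ν), (∫⁻ z, d z.1 z.2 ^ p ∂η) ^ (1 / p)

/-- The length of the curve `γ` over `[0,1]`, w.r.t. the distance function `d`:
the supremum, over all partitions `0 = t 0 ≤ t 1 ≤ ⋯ ≤ t k = 1` of `[0,1]`, of the sums of
the distances between consecutive points of the curve. -/
def pathLengthE {X : Type*} (d : X → X → ℝ≥0∞) (γ : ℝ → X) : ℝ≥0∞ :=
  ⨆ (k : ℕ) (t : Fin (k + 1) → ℝ) (_ : Monotone t) (_ : t 0 = 0) (_ : t (Fin.last k) = 1),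
    ∑ i : Fin k, d (γ (t i.castSucc)) (γ (t i.succ))

/-- The intrinsic (length) distance on the set `S` induced by the distance function `d`:
the infimum of `d`-lengths of continuous paths joining `a` to `b` inside `S`. -/
def intrinsicDistE {X : Type*} [TopologicalSpace X] (d : X → X → ℝ≥0∞) (S : Set X)
    (a b : X) : ℝ≥0∞ :=
  ⨅ (γ : ℝ → X) (_ : ContinuousOn γ (Set.Icc 0 1)) (_ : Set.MapsTo γ (Set.Icc 0 1) S)
    (_ : γ 0 = a) (_ : γ 1 = b), pathLengthE d γ

/-- `t` iterated steps of the Markov transition kernel `P`, started from the initial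
distribution `μ` (so `kernelIterate P t μ = μP^t`). -/
def kernelIterate {X : Type*} [MeasurableSpace X] (P : X → Measure X) :
    ℕ → Measure X → Measure X
  | 0, μ => μ
  | t + 1, μ => (kernelIterate P t μ).bind P

/-- A Haar probability measure for the multiplicative set `S`, viewed as a measure on the
ambient space: a probability measure carried by `S` that is invariant under left and right
translations by all elements of `S`. -/
def IsHaarLike {X : Type*} [MeasurableSpace X] [Mul X] (S : Set X) (μ : Measure X) : Prop :=
  IsProbabilityMeasure μ ∧ μ Sᶜ = 0 ∧
    ∀ a ∈ S, μ.map (fun x => a * x) = μ ∧ μ.map (fun x => x * a) = μ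

/-- The Haar probability measure of a compact matrix group `S` (such as `SO(n)` or `U(n)`),
viewed as a measure on the ambient matrix space.  For such `S` a translation-invariant
probability measure exists and is unique, so `haarLike S` is *the* Haar probability
measure of `S`. -/
def haarLike {X : Type*} [MeasurableSpace X] [Mul X] (S : Set X) : Measure X := by
  classical exact if h : ∃ μ, IsHaarLike S μ then h.choose else 0

/-- The set of pairs `1 ≤ i < j ≤ n` of indices. -/
def pairs (n : ℕ) : Finset (Fin n × Fin n) :=
  Finset.univ.filter fun p => p.1 < p.2

/-- The special orthogonal group `SO(n)`, as a subset of the `n × n` real matrices. -/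
def SO (n : ℕ) : Set (Matrix (Fin n) (Fin n) ℝ) :=
  {a | a * aᵀ = 1 ∧ a.det = 1}

/-- The Hilbert–Schmidt (Frobenius) distance `‖a - b‖_hs = √(Tr((a-b)ᵀ(a-b)))` between real
matrices, as an `ℝ≥0∞`-valued distance function. -/
def hsDist {n : ℕ} (a b : Matrix (Fin n) (Fin n) ℝ) : ℝ≥0∞ :=
  ENNReal.ofReal (Real.sqrt (Matrix.trace ((a - b)ᵀ * (a - b))))

/-- The intrinsic (Riemannian/length) metric `D` on `SO(n)` induced by the Hilbert–Schmidt
norm: the infimum of `hs`-lengths of continuous paths inside `SO(n)`. -/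
def DSO (n : ℕ) (a b : Matrix (Fin n) (Fin n) ℝ) : ℝ≥0∞ :=
  intrinsicDistE hsDist (SO n) a b

/-- The rotation `R(i,j,θ)` by the angle `θ` of the plane spanned by the `i`-th and `j`-th
canonical basis vectors: `R e_i = cos θ e_i + sin θ e_j`, `R e_j = cos θ e_j - sin θ e_i`,
and `R e_k = e_k` for `k ∉ {i,j}`. -/
def kacRot {n : ℕ} (i j : Fin n) (θ : ℝ) : Matrix (Fin n) (Fin n) ℝ :=
  Matrix.of fun k l =>
    if k = i ∧ l = i then Real.cos θ
    else if k = j ∧ l = i then Real.sin θ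
    else if k = i ∧ l = j then -Real.sin θ
    else if k = j ∧ l = j then Real.cos θ
    else if k = l then 1 else 0

/-- The measure on angles with density `ρ` with respect to Lebesgue measure on `[0, 2π]`. -/
def angleMeasure (ρ : ℝ → ℝ) : Measure ℝ :=
  (MeasureTheory.volume.restrict (Set.Icc 0 (2 * Real.pi))).withDensity
    fun θ => ENNReal.ofReal (ρ θ)

/-- The transition kernel of Kac's random walk on `SO(n)` with angle density `ρ`:
`K^{(ρ)}_x = (1/C(n,2)) ∑_{1≤i<j≤n} ∫₀^{2π} δ_{R(i,j,θ)·x} ρ(θ) dθ`. -/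
def kacKernelRho (n : ℕ) (ρ : ℝ → ℝ) (x : Matrix (Fin n) (Fin n) ℝ) :
    Measure (Matrix (Fin n) (Fin n) ℝ) :=
  (n.choose 2 : ℝ≥0∞)⁻¹ •
    ∑ p ∈ pairs n, (angleMeasure ρ).map fun θ => kacRot p.1 p.2 θ * x

section

open scoped Matrix.Norms.Frobenius

variable {n : ℕ}

theorem frobenius_norm_sq (a : Matrix (Fin n) (Fin n) ℝ) : ‖a‖ ^ 2 = trace (aᵀ * a) := by
  rw [frobenius_norm_def, ← Real.sqrt_eq_rpow, Real.sq_sqrt (by positivity)]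
  simp only [trace, diag, mul_apply, transpose_apply, Real.norm_eq_abs, Real.rpow_two, sq_abs]
  rw [Finset.sum_comm]
  simp [sq]

theorem hsDist_eq_edist (a b : Matrix (Fin n) (Fin n) ℝ) : hsDist a b = edist a b := by
  rw [hsDist, edist_dist, dist_eq_norm, ← frobenius_norm_sq, Real.sqrt_sq (norm_nonneg _)]

theorem one_mem_SO : (1 : Matrix (Fin n) (Fin n) ℝ) ∈ SO n := by simp [SO]

theorem mul_mem_SO {a b : Matrix (Fin n) (Fin n) ℝ} (ha : a ∈ SO n) (hb : b ∈ SO n) :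
    a * b ∈ SO n := by
  refine ⟨?_, by rw [det_mul, ha.2, hb.2, one_mul]⟩
  rw [transpose_mul, Matrix.mul_assoc, ← Matrix.mul_assoc b, hb.1, Matrix.one_mul, ha.1]

theorem transpose_mem_SO {a : Matrix (Fin n) (Fin n) ℝ} (ha : a ∈ SO n) : aᵀ ∈ SO n :=
  ⟨by rw [transpose_transpose]; exact mul_eq_one_comm.mp ha.1, by rw [det_transpose, ha.2]⟩

theorem transpose_mul_self_of_mem_SO {a : Matrix (Fin n) (Fin n) ℝ} (ha : a ∈ SO n) :
    aᵀ * a = 1 := mul_eq_one_comm.mp ha.1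

theorem norm_mul_left_of_mem_SO {a : Matrix (Fin n) (Fin n) ℝ} (ha : a ∈ SO n)
    (x : Matrix (Fin n) (Fin n) ℝ) : ‖a * x‖ = ‖x‖ := by
  rw [← sq_eq_sq₀ (norm_nonneg _) (norm_nonneg _), frobenius_norm_sq, frobenius_norm_sq,
    transpose_mul, Matrix.mul_assoc, ← Matrix.mul_assoc aᵀ, transpose_mul_self_of_mem_SO ha,
    Matrix.one_mul]

theorem norm_mul_right_of_mem_SO {a : Matrix (Fin n) (Fin n) ℝ} (ha : a ∈ SO n)
    (x : Matrix (Fin n) (Fin n) ℝ) : ‖x * a‖ = ‖x‖ := by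
  rw [← frobenius_norm_transpose, transpose_mul, norm_mul_left_of_mem_SO (transpose_mem_SO ha),
    frobenius_norm_transpose]

/-- The length of a matrix path is its variation for the Frobenius distance. -/
theorem pathLengthE_hsDist (γ : ℝ → Matrix (Fin n) (Fin n) ℝ) :
    pathLengthE hsDist γ = eVariationOn γ (Set.Icc 0 1) := by
  apply le_antisymm
  · refine iSup_le fun k => iSup_le fun t => iSup_le fun ht => iSup_le fun h0 => iSup_le fun h1 => ?_
    let u : ℕ → ℝ := fun i => t ⟨min i k, by omega⟩
    have hu : Monotone u := fun i j hij => ht (by simp only [Fin.mk_le_mk]; omega)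
    have hmem : ∀ i, u i ∈ Set.Icc (0 : ℝ) 1 := fun i =>
      ⟨h0 ▸ ht (Fin.zero_le _), h1 ▸ ht (Fin.le_last _)⟩
    refine le_trans (le_of_eq ?_) (eVariationOn.sum_le (f := γ) (n := k) hu hmem)
    rw [Finset.sum_range]
    refine Finset.sum_congr rfl fun i _ => ?_
    rw [hsDist_eq_edist, edist_comm]
    congr 3
    · ext; simp
    · ext; simp
  · refine iSup_le fun p => ?_
    obtain ⟨p, u, hu, hmem⟩ := p
    let t : Fin (p + 2 + 1) → ℝ := fun i =>
      if i.1 = 0 then 0 else if i.1 = p + 2 then 1 else u (i.1 - 1)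
    have ht : Monotone t := by
      intro i j hij
      have hij : i.1 ≤ j.1 := hij
      have := i.2; have := j.2
      simp only [t]
      split_ifs
      all_goals first
        | omega
        | exact le_rfl
        | exact zero_le_one
        | exact (hmem _).1
        | exact (hmem _).2
        | exact hu (by omega)
    refine le_trans ?_ (le_iSup_of_le (p + 2) <| le_iSup_of_le t <| le_iSup_of_le ht <|
      le_iSup_of_le (by simp [t]) <| le_iSup_of_le (by simp [t]) le_rfl)
    rw [Fin.sum_univ_succ, Fin.sum_univ_castSucc, Finset.sum_range]
    refine le_trans (le_trans (le_of_eq ?_) le_self_add) le_add_self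
    refine Finset.sum_congr rfl fun i _ => ?_
    have := i.2
    rw [hsDist_eq_edist, edist_comm]
    congr 2 <;> simp [t] <;> omega

theorem DSO_le_eVariationOn {a b : Matrix (Fin n) (Fin n) ℝ} {γ : ℝ → Matrix (Fin n) (Fin n) ℝ}
    (hc : ContinuousOn γ (Set.Icc 0 1)) (hS : Set.MapsTo γ (Set.Icc 0 1) (SO n))
    (h0 : γ 0 = a) (h1 : γ 1 = b) : DSO n a b ≤ eVariationOn γ (Set.Icc 0 1) := by
  rw [← pathLengthE_hsDist]
  exact iInf_le_of_le γ <| iInf_le_of_le hc <| iInf_le_of_le hS <| iInf_le_of_le h0 <|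
    iInf_le_of_le h1 le_rfl

theorem exists_path_of_DSO_lt {a b : Matrix (Fin n) (Fin n) ℝ} {c : ℝ≥0∞} (h : DSO n a b < c) :
    ∃ γ : ℝ → Matrix (Fin n) (Fin n) ℝ, ContinuousOn γ (Set.Icc 0 1) ∧
      Set.MapsTo γ (Set.Icc 0 1) (SO n) ∧ γ 0 = a ∧ γ 1 = b ∧ eVariationOn γ (Set.Icc 0 1) < c := by
  simp only [DSO, intrinsicDistE, iInf_lt_iff, pathLengthE_hsDist] at h
  obtain ⟨γ, hc, hS, h0, h1, hl⟩ := h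
  exact ⟨γ, hc, hS, h0, h1, hl⟩

theorem DSO_triangle (a b c : Matrix (Fin n) (Fin n) ℝ) : DSO n a c ≤ DSO n a b + DSO n b c := by
  refine ENNReal.le_of_forall_pos_le_add fun ε hε hfin => ?_
  have hε2 : ((ε : ℝ≥0∞) / 2) ≠ 0 := by simp [hε.ne']
  obtain ⟨hab, hbc⟩ := ENNReal.add_lt_top.mp hfin
  obtain ⟨γ₁, hc₁, hS₁, h0₁, h1₁, hl₁⟩ := exists_path_of_DSO_lt (ENNReal.lt_add_right hab.ne hε2)
  obtain ⟨γ₂, hc₂, hS₂, h0₂, h1₂, hl₂⟩ := exists_path_of_DSO_lt (ENNReal.lt_add_right hbc.ne hε2)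
  let γ : ℝ → Matrix (Fin n) (Fin n) ℝ := fun t => if t ≤ 1 / 2 then γ₁ (2 * t) else γ₂ (2 * t - 1)
  have e₁ : Set.EqOn γ (γ₁ ∘ fun t => 2 * t) (Set.Icc 0 (1 / 2)) := fun t ht => if_pos ht.2
  have e₂ : Set.EqOn γ (γ₂ ∘ fun t => 2 * t - 1) (Set.Icc (1 / 2) 1) := by
    intro t ht
    by_cases h : t ≤ 1 / 2
    · obtain rfl : t = 1 / 2 := le_antisymm h ht.1
      simp [γ, h1₁, h0₂]
    · exact if_neg h
  have m₁ : Set.MapsTo (fun t : ℝ => 2 * t) (Set.Icc 0 (1 / 2)) (Set.Icc 0 1) := fun t ht =>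
    ⟨by linarith [ht.1], by linarith [ht.2]⟩
  have m₂ : Set.MapsTo (fun t : ℝ => 2 * t - 1) (Set.Icc (1 / 2) 1) (Set.Icc 0 1) := fun t ht =>
    ⟨by linarith [ht.1], by linarith [ht.2]⟩
  have hU : Set.Icc (0 : ℝ) (1 / 2) ∪ Set.Icc (1 / 2) 1 = Set.Icc 0 1 :=
    Set.Icc_union_Icc_eq_Icc (by norm_num) (by norm_num)
  have hcont : ContinuousOn γ (Set.Icc 0 1) := by
    rw [← hU]
    refine ContinuousOn.union_of_isClosed ?_ ?_ isClosed_Icc isClosed_Icc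
    · exact (hc₁.comp (by fun_prop) m₁).congr e₁
    · exact (hc₂.comp (by fun_prop) m₂).congr e₂
  have hmaps : Set.MapsTo γ (Set.Icc 0 1) (SO n) := by
    rw [← hU]
    refine Set.MapsTo.union ?_ ?_
    · exact (hS₁.comp m₁).congr e₁.symm
    · exact (hS₂.comp m₂).congr e₂.symm
  refine (DSO_le_eVariationOn hcont hmaps (by simp [γ, h0₁]) (by norm_num [γ, h1₂])).trans ?_
  rw [← hU, eVariationOn.union γ (x := 1 / 2) (isGreatest_Icc (by norm_num))
    (isLeast_Icc (by norm_num)), eVariationOn.congr e₁, eVariationOn.congr e₂]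
  calc _ ≤ eVariationOn γ₁ (Set.Icc 0 1) + eVariationOn γ₂ (Set.Icc 0 1) := by
        gcongr
        · exact eVariationOn.comp_le_of_monotoneOn _ _ (fun x _ y _ h => by simp; linarith) m₁
        · exact eVariationOn.comp_le_of_monotoneOn _ _ (fun x _ y _ h => by simp; linarith) m₂
    _ ≤ (DSO n a b + ε / 2) + (DSO n b c + ε / 2) := by gcongr
    _ = _ := by rw [add_add_add_comm, ENNReal.add_halves]

theorem edist_mul_mul_of_mem_SO {a b : Matrix (Fin n) (Fin n) ℝ} (ha : a ∈ SO n) (hb : b ∈ SO n)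
    (x y : Matrix (Fin n) (Fin n) ℝ) : edist (a * x * b) (a * y * b) = edist x y := by
  rw [edist_dist, edist_dist, dist_eq_norm, dist_eq_norm, ← Matrix.sub_mul, ← Matrix.mul_sub,
    norm_mul_right_of_mem_SO hb, norm_mul_left_of_mem_SO ha]

theorem DSO_mul_mul_le {a b : Matrix (Fin n) (Fin n) ℝ} (ha : a ∈ SO n) (hb : b ∈ SO n)
    (x y : Matrix (Fin n) (Fin n) ℝ) : DSO n (a * x * b) (a * y * b) ≤ DSO n x y := by
  refine le_of_forall_gt fun c hc => ?_
  obtain ⟨γ, hc, hS, h0, h1, hl⟩ := exists_path_of_DSO_lt hc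
  refine lt_of_le_of_lt (DSO_le_eVariationOn (γ := fun t => a * γ t * b) ?_ ?_ ?_ ?_) ?_
  · exact ((continuous_const.matrix_mul continuous_id).matrix_mul
      continuous_const).comp_continuousOn hc
  · exact fun t ht => mul_mem_SO (mul_mem_SO ha (hS ht)) hb
  · simp [h0]
  · simp [h1]
  · refine lt_of_eq_of_lt ?_ hl
    simp only [eVariationOn, edist_mul_mul_of_mem_SO ha hb]

theorem DSO_mul_left_le {a : Matrix (Fin n) (Fin n) ℝ} (ha : a ∈ SO n)
    (x y : Matrix (Fin n) (Fin n) ℝ) : DSO n (a * x) (a * y) ≤ DSO n x y := by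
  simpa using DSO_mul_mul_le ha one_mem_SO x y

theorem DSO_mul_right_le {a : Matrix (Fin n) (Fin n) ℝ} (ha : a ∈ SO n)
    (x y : Matrix (Fin n) (Fin n) ℝ) : DSO n (x * a) (y * a) ≤ DSO n x y := by
  simpa using DSO_mul_mul_le one_mem_SO ha x y

theorem isUnit_det_of_mul_eq_zero {P : Matrix (Fin n) (Fin n) ℝ}
    (hP : ∀ N : Matrix (Fin n) (Fin n) ℝ, P * N = 0 → N = 0) : IsUnit P.det := by
  have hinj : Function.Injective (LinearMap.mulLeft ℝ P) :=
    (injective_iff_map_eq_zero _).mpr fun N hN => hP N hN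
  obtain ⟨N, hN⟩ := (LinearMap.injective_iff_surjective.mp hinj) 1
  exact Matrix.isUnit_det_of_right_inverse hN

theorem norm_le_norm_one_sub_mul {A : Matrix (Fin n) (Fin n) ℝ} (hA : Aᵀ = -A)
    (N : Matrix (Fin n) (Fin n) ℝ) : ‖N‖ ≤ ‖(1 - A) * N‖ := by
  have key : ‖(1 - A) * N‖ ^ 2 = ‖N‖ ^ 2 + ‖A * N‖ ^ 2 := by
    rw [frobenius_norm_sq, frobenius_norm_sq, frobenius_norm_sq, ← trace_add]
    congr 1
    simp only [transpose_mul, transpose_sub, transpose_one, hA]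
    noncomm_ring
  exact abs_le_of_sq_le_sq' (by nlinarith [sq_nonneg ‖A * N‖]) (norm_nonneg _) |>.2

theorem isUnit_det_one_sub {A : Matrix (Fin n) (Fin n) ℝ} (hA : Aᵀ = -A) :
    IsUnit (1 - A).det :=
  isUnit_det_of_mul_eq_zero fun N hN => by
    have := norm_le_norm_one_sub_mul hA N
    rw [hN, norm_zero] at this
    exact norm_le_zero_iff.mp this

theorem norm_inv_one_sub_mul_le {A : Matrix (Fin n) (Fin n) ℝ} (hA : Aᵀ = -A)
    (M : Matrix (Fin n) (Fin n) ℝ) : ‖(1 - A)⁻¹ * M‖ ≤ ‖M‖ := by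
  refine (norm_le_norm_one_sub_mul hA _).trans_eq ?_
  rw [← Matrix.mul_assoc, mul_nonsing_inv _ (isUnit_det_one_sub hA), Matrix.one_mul]

theorem norm_mul_inv_one_sub_le {A : Matrix (Fin n) (Fin n) ℝ} (hA : Aᵀ = -A)
    (M : Matrix (Fin n) (Fin n) ℝ) : ‖M * (1 - A)⁻¹‖ ≤ ‖M‖ := by
  rw [← frobenius_norm_transpose, ← frobenius_norm_transpose M, transpose_mul,
    transpose_nonsing_inv, transpose_sub, transpose_one]
  exact norm_inv_one_sub_mul_le (by rw [transpose_transpose, hA, neg_neg]) _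

/-- The Cayley transform of a skew-symmetric matrix. -/
def cayley (A : Matrix (Fin n) (Fin n) ℝ) : Matrix (Fin n) (Fin n) ℝ := (1 + A) * (1 - A)⁻¹

theorem cayley_mem_SO {A : Matrix (Fin n) (Fin n) ℝ} (hA : Aᵀ = -A) : cayley A ∈ SO n := by
  have hu := isUnit_det_one_sub hA
  have hT : (1 - A)ᵀ = 1 + A := by rw [transpose_sub, transpose_one, hA, sub_neg_eq_add]
  have hT' : (1 + A)ᵀ = 1 - A := by rw [← hT, transpose_transpose]
  have hdet : (1 + A).det = (1 - A).det := by rw [← hT, det_transpose]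
  have hcomm : (1 - A) * (1 + A) = (1 + A) * (1 - A) := by noncomm_ring
  constructor
  · refine mul_eq_one_comm.mp ?_
    rw [cayley, transpose_mul, transpose_nonsing_inv, hT, hT', Matrix.mul_assoc,
      ← Matrix.mul_assoc (1 - A), hcomm, Matrix.mul_assoc (1 + A), mul_nonsing_inv _ hu,
      Matrix.mul_one, nonsing_inv_mul _ (hdet ▸ hu)]
  · rw [cayley, det_mul, hdet, ← det_mul, mul_nonsing_inv _ hu, det_one]

theorem cayley_eq {A : Matrix (Fin n) (Fin n) ℝ} (hA : Aᵀ = -A) :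
    cayley A = 2 • (1 - A)⁻¹ - 1 := by
  have : (1 + A) = 2 • (1 : Matrix (Fin n) (Fin n) ℝ) - (1 - A) := by noncomm_ring
  rw [cayley, this, Matrix.sub_mul, mul_nonsing_inv _ (isUnit_det_one_sub hA), smul_mul,
    Matrix.one_mul]

theorem norm_cayley_smul_sub_le {A : Matrix (Fin n) (Fin n) ℝ} (hA : Aᵀ = -A) (s t : ℝ) :
    ‖cayley (s • A) - cayley (t • A)‖ ≤ 2 * ‖A‖ * |s - t| := by
  have hs : ∀ r : ℝ, (r • A)ᵀ = -(r • A) := fun r => by rw [transpose_smul, hA, smul_neg]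
  have key : cayley (s • A) - cayley (t • A) =
      (2 * (s - t)) • ((1 - s • A)⁻¹ * (A * (1 - t • A)⁻¹)) := by
    have h1 : (1 - s • A)⁻¹ = (1 - s • A)⁻¹ * (1 - t • A) * (1 - t • A)⁻¹ := by
      rw [Matrix.mul_assoc, mul_nonsing_inv _ (isUnit_det_one_sub (hs t)), Matrix.mul_one]
    have h2 : (1 - t • A)⁻¹ = (1 - s • A)⁻¹ * (1 - s • A) * (1 - t • A)⁻¹ := by
      rw [nonsing_inv_mul _ (isUnit_det_one_sub (hs s)), Matrix.one_mul]
    rw [cayley_eq (hs s), cayley_eq (hs t), sub_sub_sub_cancel_right, ← smul_sub]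
    have h3 : (1 - s • A)⁻¹ - (1 - t • A)⁻¹ =
        (s - t) • ((1 - s • A)⁻¹ * (A * (1 - t • A)⁻¹)) := by
      conv_lhs => rw [h2]; enter [1]; rw [h1]
      rw [← Matrix.sub_mul, ← Matrix.mul_sub, show 1 - t • A - (1 - s • A) = (s - t) • A by
        rw [sub_smul]; abel, Matrix.mul_smul, smul_mul, Matrix.mul_assoc]
    rw [h3, mul_smul, ← Nat.cast_smul_eq_nsmul ℝ 2]
    norm_num
  rw [key, norm_smul, Real.norm_eq_abs, abs_mul, abs_two]
  have := (norm_inv_one_sub_mul_le (hs s) (A * (1 - t • A)⁻¹)).trans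
    (norm_mul_inv_one_sub_le (hs t) A)
  nlinarith [abs_nonneg (s - t)]

theorem DSO_one_cayley_le {A : Matrix (Fin n) (Fin n) ℝ} (hA : Aᵀ = -A) :
    DSO n 1 (cayley A) ≤ ENNReal.ofReal (2 * ‖A‖) := by
  have hs : ∀ r : ℝ, (r • A)ᵀ = -(r • A) := fun r => by rw [transpose_smul, hA, smul_neg]
  have hL : LipschitzWith (2 * ‖A‖₊) (fun t : ℝ => cayley (t • A)) :=
    LipschitzWith.of_dist_le_mul fun s t => by
      rw [dist_eq_norm, Real.dist_eq]
      exact norm_cayley_smul_sub_le hA s t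
  refine (DSO_le_eVariationOn (γ := fun t : ℝ => cayley (t • A)) hL.continuous.continuousOn
    (fun t _ => cayley_mem_SO (hs t)) (by simp [cayley]) (by simp)).trans ?_
  refine (LipschitzOnWith.comp_eVariationOn_le (f := fun t : ℝ => cayley (t • A))
    (t := Set.univ) hL.lipschitzOnWith (g := id) (Set.mapsTo_univ _ _)).trans ?_
  have h := MonotoneOn.eVariationOn_eq (f := (id : ℝ → ℝ)) (s := Set.Icc 0 1)
    (monotone_id.monotoneOn _) (Set.left_mem_Icc.mpr zero_le_one)
    (Set.right_mem_Icc.mpr zero_le_one)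
  rw [Set.inter_self] at h
  rw [h, ENNReal.ofReal_mul zero_le_two, ofReal_norm]
  simp [enorm_eq_nnnorm]

theorem DSO_one_le {g : Matrix (Fin n) (Fin n) ℝ} (hg : g ∈ SO n) (h2 : ‖g - 1‖ < 2) :
    DSO n 1 g ≤ ENNReal.ofReal (‖g - 1‖ / (1 - ‖g - 1‖ / 2)) := by
  have hu : IsUnit (g + 1).det := isUnit_det_of_mul_eq_zero fun N hN => by
    have h : (2 : ℝ) • N = -((g - 1) * N) := by
      rw [eq_neg_iff_add_eq_zero, ← hN, two_smul]; noncomm_ring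
    have h' : 2 * ‖N‖ ≤ ‖g - 1‖ * ‖N‖ := by
      calc 2 * ‖N‖ = ‖(2 : ℝ) • N‖ := by rw [norm_smul]; norm_num
        _ ≤ _ := by rw [h, norm_neg]; exact norm_mul_le _ _
    exact norm_le_zero_iff.mp (by nlinarith [norm_nonneg N])
  obtain ⟨A, hA⟩ : ∃ A, A = (g - 1) * (g + 1)⁻¹ := ⟨_, rfl⟩
  have hAr : A * (g + 1) = g - 1 := by
    rw [hA, Matrix.mul_assoc, nonsing_inv_mul _ hu, Matrix.mul_one]
  have hAl : (g + 1) * A = g - 1 := by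
    rw [hA, ← Matrix.mul_assoc, show (g + 1) * (g - 1) = (g - 1) * (g + 1) by noncomm_ring,
      Matrix.mul_assoc, mul_nonsing_inv _ hu, Matrix.mul_one]
  have hAt : (g + 1) * Aᵀ = 1 - g := by
    have h := congrArg (fun M => g * Mᵀ) hAr
    simp only [transpose_mul, transpose_add, transpose_sub, transpose_one] at h
    rw [← Matrix.mul_assoc, Matrix.mul_add, Matrix.mul_sub, hg.1, Matrix.mul_one] at h
    rw [add_comm, h]
  have hskew : Aᵀ = -A := by
    have h : (g + 1) * (Aᵀ + A) = 0 := by rw [Matrix.mul_add, hAt, hAl]; abel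
    have h' := congrArg (fun M => (g + 1)⁻¹ * M) h
    simp only [← Matrix.mul_assoc, nonsing_inv_mul _ hu, Matrix.one_mul, Matrix.mul_zero] at h'
    exact eq_neg_of_add_eq_zero_left h'
  have hgA : cayley A = g := by
    have h : 1 + A = g * (1 - A) := by
      have : g * A + A = g - 1 := by rw [← hAl]; noncomm_ring
      rw [Matrix.mul_sub, Matrix.mul_one, eq_sub_iff_add_eq, add_assoc, add_comm A, this]; abel
    rw [cayley, h, Matrix.mul_assoc, mul_nonsing_inv _ (isUnit_det_one_sub hskew), Matrix.mul_one]
  have hn : 2 * ‖A‖ ≤ ‖g - 1‖ + ‖A‖ * ‖g - 1‖ := by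
    have h : (2 : ℝ) • A = (g - 1) - A * (g - 1) := by
      have : (2 : ℝ) • A = A * (g + 1) - A * (g - 1) := by rw [two_smul]; noncomm_ring
      rw [this, hAr]
    calc 2 * ‖A‖ = ‖(2 : ℝ) • A‖ := by rw [norm_smul]; norm_num
      _ ≤ ‖g - 1‖ + ‖A * (g - 1)‖ := by rw [h]; exact norm_sub_le _ _
      _ ≤ _ := by gcongr; exact norm_mul_le _ _
  nth_rw 1 [← hgA]
  refine (DSO_one_cayley_le hskew).trans (ENNReal.ofReal_le_ofReal ?_)
  rw [le_div_iff₀ (by linarith)]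
  nlinarith

theorem kacRot_mul_apply {i j : Fin n} (hij : i ≠ j) (θ : ℝ) (x : Matrix (Fin n) (Fin n) ℝ)
    (k l : Fin n) : (kacRot i j θ * x) k l = x k l +
      (if k = i then (Real.cos θ - 1) * x i l - Real.sin θ * x j l else 0) +
      (if k = j then Real.sin θ * x i l + (Real.cos θ - 1) * x j l else 0) := by
  have h : ∀ m, kacRot i j θ k m * x m l = (if m = k then x k l else 0) +
      (if m = i then (if k = i then (Real.cos θ - 1) * x i l
        else if k = j then Real.sin θ * x i l else 0) else 0) +
      (if m = j then (if k = i then - Real.sin θ * x j l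
        else if k = j then (Real.cos θ - 1) * x j l else 0) else 0) := by
    intro m
    simp only [kacRot, of_apply]
    grind
  rw [mul_apply, Finset.sum_congr rfl fun m _ => h m, Finset.sum_add_distrib,
    Finset.sum_add_distrib]
  simp only [Finset.sum_ite_eq', Finset.mem_univ, if_true]
  grind

theorem kacRot_zero {i j : Fin n} (hij : i ≠ j) : kacRot i j 0 = 1 := by
  ext k l
  rw [← Matrix.mul_one (kacRot i j 0), kacRot_mul_apply hij]
  simp

theorem kacRot_add {i j : Fin n} (hij : i ≠ j) (s t : ℝ) :
    kacRot i j (s + t) = kacRot i j s * kacRot i j t := by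
  ext k l
  rw [← Matrix.mul_one (kacRot i j (s + t)), ← Matrix.mul_one (kacRot i j t)]
  simp only [kacRot_mul_apply hij, Real.cos_add, Real.sin_add]
  split_ifs <;> simp_all <;> ring

theorem kacRot_transpose {i j : Fin n} (hij : i ≠ j) (s : ℝ) :
    (kacRot i j s)ᵀ = kacRot i j (-s) := by
  ext k l
  simp only [kacRot, of_apply, transpose_apply, Real.cos_neg, Real.sin_neg]
  grind

theorem kacRot_mem_SO {i j : Fin n} (hij : i ≠ j) (s : ℝ) : kacRot i j s ∈ SO n := by
  have h : ∀ t, kacRot i j t * (kacRot i j t)ᵀ = 1 := fun t => by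
    rw [kacRot_transpose hij, ← kacRot_add hij, add_neg_cancel, kacRot_zero hij]
  refine ⟨h s, ?_⟩
  have h' := congrArg det (h (s / 2))
  rw [det_mul, det_transpose, ← det_mul, ← kacRot_add hij, add_halves, det_one] at h'
  exact h'

theorem trace_kacRot_mul {i j : Fin n} (hij : i ≠ j) (θ : ℝ) (x : Matrix (Fin n) (Fin n) ℝ) :
    trace (kacRot i j θ * x) =
      trace x + (Real.cos θ - 1) * (x i i + x j j) + Real.sin θ * (x i j - x j i) := by
  simp only [trace, diag, kacRot_mul_apply hij, Finset.sum_add_distrib, Finset.sum_ite_eq',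
    Finset.mem_univ, if_true]
  ring

theorem norm_sub_one_sq {g : Matrix (Fin n) (Fin n) ℝ} (hg : g ∈ SO n) :
    ‖g - 1‖ ^ 2 = 2 * n - 2 * trace g := by
  rw [frobenius_norm_sq, transpose_sub, transpose_one, Matrix.sub_mul, Matrix.mul_sub,
    transpose_mul_self_of_mem_SO hg]
  simp only [Matrix.mul_one, Matrix.one_mul, trace_sub, trace_transpose, trace_one,
    Fintype.card_fin]
  ring

theorem sum_row_sq {g : Matrix (Fin n) (Fin n) ℝ} (hg : g ∈ SO n) (i : Fin n) :
    ∑ j, g i j ^ 2 = 1 := by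
  have h := congrFun (congrFun hg.1 i) i
  simpa [mul_apply, sq] using h

/-- Rotating in the plane `(i, j)` removes the `(i, j)` component of `g - 1`. -/
theorem exists_norm_kacRot_mul_sub_one_sq_le {g : Matrix (Fin n) (Fin n) ℝ} (hg : g ∈ SO n)
    {i j : Fin n} (hij : i ≠ j) :
    ∃ s : ℝ, ‖kacRot i j s * g - 1‖ ^ 2 ≤ ‖g - 1‖ ^ 2 - (g i j - g j i) ^ 2 / 2 := by
  obtain ⟨α, hα⟩ : ∃ α, α = g i i + g j j := ⟨_, rfl⟩
  obtain ⟨β, hβ⟩ : ∃ β, β = g i j - g j i := ⟨_, rfl⟩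
  have hc := Complex.norm_mul_cos_arg ⟨α, β⟩
  have hs := Complex.norm_mul_sin_arg ⟨α, β⟩
  refine ⟨Complex.arg ⟨α, β⟩, ?_⟩
  rw [norm_sub_one_sq (mul_mem_SO (kacRot_mem_SO hij _) hg), norm_sub_one_sq hg,
    trace_kacRot_mul hij, ← hα, ← hβ]
  have hr0 := norm_nonneg (⟨α, β⟩ : ℂ)
  generalize ‖(⟨α, β⟩ : ℂ)‖ = r at *
  generalize Complex.arg ⟨α, β⟩ = s at *
  simp only at hc hs
  have hcs := Real.cos_sq_add_sin_sq s
  have hpair : ∀ k, g k i ^ 2 + g k j ^ 2 ≤ 1 := fun k => by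
    rw [← sum_row_sq hg k, ← Finset.sum_pair (f := fun m => g k m ^ 2) hij]
    exact Finset.sum_le_sum_of_subset_of_nonneg (Finset.subset_univ _) fun _ _ _ => sq_nonneg _
  have hr2 : r ^ 2 = α ^ 2 + β ^ 2 := by rw [← hc, ← hs]; nlinarith
  have hr : Real.cos s * α + Real.sin s * β = r := by rw [← hc, ← hs]; nlinarith
  have hr4 : r ^ 2 ≤ 4 := by
    rw [hr2, hα, hβ]
    nlinarith [hpair i, hpair j, sq_nonneg (g i i - g j j), sq_nonneg (g i j + g j i)]
  have hrle : r ≤ 2 := by nlinarith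
  have hαr : α ≤ r := by nlinarith [sq_nonneg β]
  nlinarith [mul_nonneg (sub_nonneg.mpr hαr) (by linarith : (0 : ℝ) ≤ 4 - (r + α))]

theorem sum_sum_eq_two_mul_sum_pairs (F : Fin n → Fin n → ℝ) (hF : ∀ i j, F i j = F j i) :
    ∑ i, ∑ j, F i j = 2 * ∑ p ∈ pairs n, F p.1 p.2 + ∑ i, F i i := by
  have h1 : ∀ i j, F i j = (if i < j then F i j else 0) + (if j < i then F j i else 0) +
      (if i = j then F i i else 0) := by
    intro i j
    rcases lt_trichotomy i j with h | h | h
    · simp [h, h.not_gt, h.ne]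
    · simp [h]
    · simp [h, h.not_gt, h.ne', hF i j]
  have h2 : ∑ p ∈ pairs n, F p.1 p.2 = ∑ i, ∑ j, if i < j then F i j else 0 := by
    rw [pairs, Finset.sum_filter, ← Finset.univ_product_univ, Finset.sum_product]
  have h3 : ∑ i, ∑ j, (if j < i then F j i else 0) = ∑ i, ∑ j, if i < j then F i j else 0 :=
    Finset.sum_comm
  rw [Finset.sum_congr rfl fun i _ => Finset.sum_congr rfl fun j _ => h1 i j]
  simp only [Finset.sum_add_distrib]
  rw [h3, ← h2]
  simp only [Finset.sum_ite_eq, Finset.mem_univ, if_true]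
  ring

theorem card_pairs (n : ℕ) : (pairs n).card = n.choose 2 := by
  have h := sum_sum_eq_two_mul_sum_pairs (n := n) (fun _ _ => 1) fun _ _ => rfl
  have h' := Nat.cast_choose_two ℝ n
  have : ((pairs n).card : ℝ) = n.choose 2 := by
    simp at h
    rw [h']; linarith
  exact_mod_cast this

theorem ne_of_mem_pairs {p : Fin n × Fin n} (hp : p ∈ pairs n) : p.1 ≠ p.2 := by
  simp only [pairs, Finset.mem_filter] at hp
  exact hp.2.ne

theorem sum_pairs_skew_sq_ge {g : Matrix (Fin n) (Fin n) ℝ} (hg : g ∈ SO n) :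
    2 * ‖g - 1‖ ^ 2 - ‖g - 1‖ ^ 4 / 2 ≤ ∑ p ∈ pairs n, (g p.1 p.2 - g p.2 p.1) ^ 2 := by
  have h1 := sum_sum_eq_two_mul_sum_pairs (fun i j => (g i j - g j i) ^ 2) fun i j => by ring
  have h2 : ‖g - gᵀ‖ ^ 2 = ∑ i, ∑ j, (g i j - g j i) ^ 2 := by
    rw [frobenius_norm_sq, trace, Finset.sum_comm]
    simp [mul_apply, sq]
  have h3 : ‖(g - 1) * (g - 1)ᵀ‖ ≤ ‖g - 1‖ ^ 2 := by
    rw [sq]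
    nth_rw 3 [← frobenius_norm_transpose]
    exact norm_mul_le _ _
  have h4 : ‖g - gᵀ‖ ^ 2 + ‖(g - 1) * (g - 1)ᵀ‖ ^ 2 = 4 * ‖g - 1‖ ^ 2 := by
    have e : (g - 1) * (g - 1)ᵀ = (2 : ℝ) • (1 : Matrix (Fin n) (Fin n) ℝ) - g - gᵀ := by
      rw [transpose_sub, transpose_one, Matrix.sub_mul, Matrix.mul_sub, hg.1, two_smul]
      noncomm_ring
    rw [norm_sub_one_sq hg, frobenius_norm_sq, e, frobenius_norm_sq]
    have hT : trace (gᵀ * gᵀ) = trace (g * g) := by rw [← transpose_mul, trace_transpose]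
    simp only [transpose_sub, transpose_smul, transpose_one, transpose_transpose, Matrix.sub_mul,
      Matrix.mul_sub, hg.1, transpose_mul_self_of_mem_SO hg, smul_mul, Matrix.mul_smul,
      Matrix.one_mul, Matrix.mul_one, trace_sub, trace_smul, trace_transpose, trace_one, hT,
      Fintype.card_fin, smul_eq_mul]
    ring
  have h5 : ‖(g - 1) * (g - 1)ᵀ‖ ^ 2 ≤ ‖g - 1‖ ^ 4 := by
    calc _ ≤ (‖g - 1‖ ^ 2) ^ 2 := by gcongr
      _ = _ := by ring
  simp only [sub_self, ne_eq, OfNat.ofNat_ne_zero, not_false_eq_true, zero_pow,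
    Finset.sum_const_zero, add_zero] at h1
  linarith

theorem exists_sum_pairs_norm_sq_le {g : Matrix (Fin n) (Fin n) ℝ} (hg : g ∈ SO n) :
    ∃ s : Fin n × Fin n → ℝ, (∀ p ∈ pairs n, ‖kacRot p.1 p.2 (s p) * g - 1‖ ≤ ‖g - 1‖) ∧
      ∑ p ∈ pairs n, ‖kacRot p.1 p.2 (s p) * g - 1‖ ^ 2 ≤
        ((n.choose 2 : ℝ) - 1 + ‖g - 1‖ ^ 2 / 4) * ‖g - 1‖ ^ 2 := by
  have h : ∀ p : Fin n × Fin n, ∃ s : ℝ, p ∈ pairs n →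
      ‖kacRot p.1 p.2 s * g - 1‖ ^ 2 ≤ ‖g - 1‖ ^ 2 - (g p.1 p.2 - g p.2 p.1) ^ 2 / 2 := fun p => by
    by_cases hp : p ∈ pairs n
    · obtain ⟨s, hs⟩ := exists_norm_kacRot_mul_sub_one_sq_le hg (ne_of_mem_pairs hp)
      exact ⟨s, fun _ => hs⟩
    · exact ⟨0, fun h => absurd h hp⟩
  choose s hs using h
  refine ⟨s, fun p hp => ?_, ?_⟩
  · refine abs_le_of_sq_le_sq' ((hs p hp).trans ?_) (norm_nonneg _) |>.2
    linarith [sq_nonneg (g p.1 p.2 - g p.2 p.1)]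
  · refine (Finset.sum_le_sum hs).trans ?_
    rw [Finset.sum_sub_distrib, Finset.sum_const, card_pairs, ← Finset.sum_div, nsmul_eq_mul]
    linarith [sum_pairs_skew_sq_ge hg]

/-- The contraction factor of one step of mesh `h` along a path in `SO n`. -/
def stepFactor (n : ℕ) (h : ℝ) : ℝ := √((n.choose 2 : ℝ) - 1 + h ^ 2 / 4) / (1 - h / 2)

theorem one_le_choose_two (hn : 2 ≤ n) : (1 : ℝ) ≤ n.choose 2 := by
  exact_mod_cast Nat.choose_pos hn

theorem exists_Lp_DSO_kacRot_mul_le (hn : 2 ≤ n) {h : ℝ} (h1 : h ≤ 1)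
    {g : Matrix (Fin n) (Fin n) ℝ} (hg : g ∈ SO n) (hgh : ‖g - 1‖ ≤ h) :
    ∃ s : Fin n × Fin n → ℝ,
      (∑ p ∈ pairs n, DSO n 1 (kacRot p.1 p.2 (s p) * g) ^ (2 : ℝ)) ^ (1 / (2 : ℝ)) ≤
        ENNReal.ofReal (stepFactor n h * ‖g - 1‖) := by
  obtain ⟨s, hs, hsum⟩ := exists_sum_pairs_norm_sq_le hg
  refine ⟨s, ?_⟩
  have hN := one_le_choose_two hn
  have hg0 := norm_nonneg (g - 1)
  have hD : ∀ p ∈ pairs n, DSO n 1 (kacRot p.1 p.2 (s p) * g) ^ (2 : ℝ) ≤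
      ENNReal.ofReal (‖kacRot p.1 p.2 (s p) * g - 1‖ ^ 2 / (1 - h / 2) ^ 2) := fun p hp => by
    have hw := hs p hp
    have hw0 := norm_nonneg (kacRot p.1 p.2 (s p) * g - 1)
    rw [← div_pow, ENNReal.ofReal_pow (div_nonneg hw0 (by linarith)), ENNReal.rpow_two]
    gcongr
    refine (DSO_one_le (mul_mem_SO (kacRot_mem_SO (ne_of_mem_pairs hp) _) hg)
      (by linarith)).trans (ENNReal.ofReal_le_ofReal ?_)
    gcongr
    · linarith
    · linarith
  rw [one_div, ENNReal.rpow_inv_le_iff two_pos]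
  refine (Finset.sum_le_sum hD).trans ?_
  rw [← ENNReal.ofReal_sum_of_nonneg (fun _ _ => by positivity), ← Finset.sum_div,
    stepFactor, ENNReal.rpow_two, ← ENNReal.ofReal_pow (mul_nonneg (div_nonneg
      (Real.sqrt_nonneg _) (by linarith)) hg0)]
  apply ENNReal.ofReal_le_ofReal
  rw [mul_pow, div_pow, Real.sq_sqrt (by nlinarith [sq_nonneg h]), div_mul_eq_mul_div]
  gcongr
  refine hsum.trans ?_
  gcongr

theorem exists_Lp_DSO_chain_le (hn : 2 ≤ n) {h : ℝ} (h1 : h ≤ 1)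
    {y : ℕ → Matrix (Fin n) (Fin n) ℝ} (hy : ∀ k, y k ∈ SO n) (hy0 : y 0 = 1)
    (hyh : ∀ k, ‖y (k + 1) - y k‖ ≤ h) (k : ℕ) :
    ∃ s : Fin n × Fin n → ℝ,
      (∑ p ∈ pairs n, DSO n 1 (kacRot p.1 p.2 (s p) * y k) ^ (2 : ℝ)) ^ (1 / (2 : ℝ)) ≤
        ∑ l ∈ Finset.range k, ENNReal.ofReal (stepFactor n h * ‖y (l + 1) - y l‖) := by
  induction k with
  | zero =>
    refine ⟨0, ?_⟩
    have : ∀ p ∈ pairs n, DSO n 1 (kacRot p.1 p.2 ((0 : Fin n × Fin n → ℝ) p) * y 0) ^ (2 : ℝ) = 0 := by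
      intro p hp
      rw [Pi.zero_apply, kacRot_zero (ne_of_mem_pairs hp), Matrix.one_mul, hy0]
      have h0 := DSO_one_le (one_mem_SO (n := n)) (by simp)
      simp only [sub_self, norm_zero, zero_div, ENNReal.ofReal_zero, nonpos_iff_eq_zero] at h0
      simp [h0]
    rw [Finset.sum_eq_zero this]
    simp
  | succ k ih =>
    obtain ⟨s, hs⟩ := ih
    have hnorm : ‖y (k + 1) * (y k)ᵀ - 1‖ = ‖y (k + 1) - y k‖ := by
      rw [← (hy k).1, ← Matrix.sub_mul, norm_mul_right_of_mem_SO (transpose_mem_SO (hy k))]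
    obtain ⟨t, ht⟩ := exists_Lp_DSO_kacRot_mul_le hn h1
      (mul_mem_SO (hy (k + 1)) (transpose_mem_SO (hy k))) (hnorm.trans_le (hyh k))
    refine ⟨s + t, ?_⟩
    rw [Finset.sum_range_succ, ← hnorm]
    refine le_trans ?_ ((ENNReal.Lp_add_le _ _ _ one_le_two).trans (add_le_add hs ht))
    gcongr with p hp
    have hp' := ne_of_mem_pairs hp
    refine (DSO_triangle 1 (kacRot p.1 p.2 (s p) * y k) _).trans ?_
    gcongr
    rw [Pi.add_apply, kacRot_add hp', Matrix.mul_assoc]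
    refine (DSO_mul_left_le (kacRot_mem_SO hp' _) _ _).trans ?_
    have := DSO_mul_right_le (hy k) 1 (kacRot p.1 p.2 (t p) * (y (k + 1) * (y k)ᵀ))
    rwa [Matrix.one_mul, Matrix.mul_assoc, Matrix.mul_assoc, transpose_mul_self_of_mem_SO (hy k),
      Matrix.mul_one] at this

theorem exists_Lp_DSO_path_le (hn : 2 ≤ n) {h : ℝ} (h0 : 0 < h) (h1 : h ≤ 1)
    {γ : ℝ → Matrix (Fin n) (Fin n) ℝ} (hc : ContinuousOn γ (Set.Icc 0 1))
    (hS : Set.MapsTo γ (Set.Icc 0 1) (SO n)) (hγ : γ 0 = 1) :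
    ∃ s : Fin n × Fin n → ℝ,
      (∑ p ∈ pairs n, DSO n 1 (kacRot p.1 p.2 (s p) * γ 1) ^ (2 : ℝ)) ^ (1 / (2 : ℝ)) ≤
        ENNReal.ofReal (stepFactor n h) * eVariationOn γ (Set.Icc 0 1) := by
  have hN := one_le_choose_two hn
  obtain ⟨δ, hδ, hunif⟩ := Metric.uniformContinuousOn_iff.mp
    (isCompact_Icc.uniformContinuousOn_of_continuous hc) h h0
  obtain ⟨m, hm⟩ := exists_nat_one_div_lt hδ
  let u : ℕ → ℝ := fun k => min (k / (m + 1 : ℝ)) 1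
  have hu : Monotone u := fun i j hij => by
    simp only [u]
    gcongr
  have hmem : ∀ k, u k ∈ Set.Icc (0 : ℝ) 1 := fun k => ⟨by positivity, min_le_right _ _⟩
  have hdist : ∀ k, ‖γ (u (k + 1)) - γ (u k)‖ ≤ h := fun k => by
    rw [← dist_eq_norm]
    refine (hunif _ (hmem _) _ (hmem _) ?_).le
    refine lt_of_le_of_lt ?_ hm
    rw [Real.dist_eq, abs_of_nonneg (sub_nonneg.mpr (hu (Nat.le_succ k)))]
    simp only [u]
    push_cast
    rw [add_div]
    have : 0 < 1 / (m + 1 : ℝ) := by positivity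
    rcases le_total ((k : ℝ) / (m + 1 : ℝ)) 1 with h | h
    · rw [min_eq_left h]
      linarith [min_le_left ((k : ℝ) / (m + 1) + 1 / (m + 1)) 1]
    · rw [min_eq_right h]
      linarith [min_le_right ((k : ℝ) / (m + 1) + 1 / (m + 1)) 1]
  obtain ⟨s, hs⟩ := exists_Lp_DSO_chain_le hn h1 (y := fun k => γ (u k)) (fun k => hS (hmem k))
    (by simp [u, hγ]) hdist (m + 1)
  have hu1 : u (m + 1) = 1 := by
    simp only [u]
    push_cast
    rw [div_self (by positivity), min_self]
  refine ⟨s, ?_⟩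
  simp only [hu1] at hs
  refine hs.trans ?_
  have hf : 0 ≤ stepFactor n h := div_nonneg (Real.sqrt_nonneg _) (by linarith)
  simp only [ENNReal.ofReal_mul hf, ← dist_eq_norm, ← edist_dist]
  rw [← Finset.mul_sum]
  gcongr
  exact eVariationOn.sum_le hu hmem

theorem exists_sum_DSO_sq_lt (hn : 2 ≤ n) {g : Matrix (Fin n) (Fin n) ℝ}
    (hfin : DSO n 1 g ≠ ⊤) {ε : ℝ≥0∞} (hε : ε ≠ 0) :
    ∃ s : Fin n × Fin n → ℝ,
      ∑ p ∈ pairs n, DSO n 1 (kacRot p.1 p.2 (s p) * g) ^ (2 : ℝ) <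
        ((n.choose 2 : ℝ≥0∞) - 1) * DSO n 1 g ^ (2 : ℝ) + ε := by
  have hN := one_le_choose_two hn
  have hlim : Tendsto (fun h : ℝ => (ENNReal.ofReal (stepFactor n h) *
      (DSO n 1 g + ENNReal.ofReal h)) ^ (2 : ℝ)) (𝓝[>] 0)
      (𝓝 (((n.choose 2 : ℝ≥0∞) - 1) * DSO n 1 g ^ (2 : ℝ))) := by
    have e : ((n.choose 2 : ℝ≥0∞) - 1) * DSO n 1 g ^ (2 : ℝ) =
        (ENNReal.ofReal (stepFactor n 0) * (DSO n 1 g + ENNReal.ofReal 0)) ^ (2 : ℝ) := by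
      rw [ENNReal.mul_rpow_of_nonneg _ _ zero_le_two, ENNReal.ofReal_zero, add_zero,
        ENNReal.rpow_two (ENNReal.ofReal _), stepFactor]
      simp only [ne_eq, OfNat.ofNat_ne_zero, not_false_eq_true, zero_pow, zero_div, add_zero,
        sub_zero, div_one]
      rw [← ENNReal.ofReal_pow (Real.sqrt_nonneg _), Real.sq_sqrt (by linarith),
        ENNReal.ofReal_sub _ zero_le_one]
      simp
    rw [e]
    refine Tendsto.mono_left ?_ nhdsWithin_le_nhds
    refine ((ENNReal.continuous_rpow_const).tendsto _).comp ?_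
    refine ENNReal.Tendsto.mul ?_ (Or.inr (by simp [hfin])) ?_ (Or.inr (by simp))
    · refine (ENNReal.continuous_ofReal.tendsto _).comp (ContinuousAt.tendsto ?_)
      unfold stepFactor
      fun_prop (disch := norm_num)
    · exact tendsto_const_nhds.add (ENNReal.continuous_ofReal.tendsto 0)
  have hlt := hlim.eventually_lt_const (u := ((n.choose 2 : ℝ≥0∞) - 1) * DSO n 1 g ^ (2 : ℝ) + ε)
    (ENNReal.lt_add_right (ENNReal.mul_ne_top (by simp) (by simp [hfin])) hε)
  obtain ⟨h, hh, h0, h1⟩ := (hlt.and (Ioc_mem_nhdsGT (zero_lt_one' ℝ))).exists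
  obtain ⟨γ, hc, hS, hγ0, hγ1, hl⟩ := exists_path_of_DSO_lt
    (ENNReal.lt_add_right hfin (b := ENNReal.ofReal h) (by simpa using h0))
  obtain ⟨s, hs⟩ := exists_Lp_DSO_path_le hn h0 h1 hc hS hγ0
  refine ⟨s, lt_of_le_of_lt ?_ hh⟩
  rw [hγ1, one_div, ENNReal.rpow_inv_le_iff two_pos] at hs
  refine hs.trans ?_
  gcongr

theorem DSO_le_of_mem_SO {x y : Matrix (Fin n) (Fin n) ℝ} (hx : x ∈ SO n) (hy : y ∈ SO n)
    (h2 : ‖y - x‖ < 2) : DSO n x y ≤ ENNReal.ofReal (‖y - x‖ / (1 - ‖y - x‖ / 2)) := by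
  have hnorm : ‖y * xᵀ - 1‖ = ‖y - x‖ := by
    rw [← hx.1, ← Matrix.sub_mul, norm_mul_right_of_mem_SO (transpose_mem_SO hx)]
  have h := DSO_mul_right_le hx 1 (y * xᵀ)
  rw [Matrix.one_mul, Matrix.mul_assoc, transpose_mul_self_of_mem_SO hx, Matrix.mul_one] at h
  rw [← hnorm] at h2 ⊢
  exact h.trans (DSO_one_le (mul_mem_SO hy (transpose_mem_SO hx)) h2)

theorem tendsto_ofReal_norm_sub (x : Matrix (Fin n) (Fin n) ℝ) :
    Tendsto (fun g => ENNReal.ofReal (‖g - x‖ / (1 - ‖g - x‖ / 2))) (𝓝[SO n] x) (𝓝 0) := by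
  have h : ContinuousAt (fun g => ENNReal.ofReal (‖g - x‖ / (1 - ‖g - x‖ / 2))) x := by
    refine ENNReal.continuous_ofReal.continuousAt.comp ?_
    refine ContinuousAt.div ?_ ?_ (by simp)
    · exact (continuous_id.sub continuous_const).norm.continuousAt
    · exact (continuous_const.sub
        ((continuous_id.sub continuous_const).norm.div_const 2)).continuousAt
  have h' := h.tendsto
  simp only [sub_self, norm_zero, zero_div, ENNReal.ofReal_zero] at h'
  exact h'.mono_left nhdsWithin_le_nhds

theorem eventually_norm_sub_lt_two (x : Matrix (Fin n) (Fin n) ℝ) :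
    ∀ᶠ g in 𝓝[SO n] x, ‖g - x‖ < 2 := by
  have h : ContinuousAt (fun g => ‖g - x‖) x :=
    (continuous_id.sub continuous_const).norm.continuousAt
  exact (h.tendsto.mono_left nhdsWithin_le_nhds).eventually_lt_const (by simp)

theorem tendsto_DSO_left {x : Matrix (Fin n) (Fin n) ℝ} (hx : x ∈ SO n) :
    Tendsto (fun g => DSO n g x) (𝓝[SO n] x) (𝓝 0) := by
  refine tendsto_of_tendsto_of_tendsto_of_le_of_le' tendsto_const_nhds
    (tendsto_ofReal_norm_sub x) (Eventually.of_forall fun _ => zero_le) ?_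
  filter_upwards [eventually_norm_sub_lt_two x, self_mem_nhdsWithin] with g hg hgS
  rw [norm_sub_rev] at hg ⊢
  exact DSO_le_of_mem_SO hgS hx hg

theorem tendsto_DSO_right {x : Matrix (Fin n) (Fin n) ℝ} (hx : x ∈ SO n) :
    Tendsto (fun g => DSO n x g) (𝓝[SO n] x) (𝓝 0) := by
  refine tendsto_of_tendsto_of_tendsto_of_le_of_le' tendsto_const_nhds
    (tendsto_ofReal_norm_sub x) (Eventually.of_forall fun _ => zero_le) ?_
  filter_upwards [eventually_norm_sub_lt_two x, self_mem_nhdsWithin] with g hg hgS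
  exact DSO_le_of_mem_SO hx hgS hg

theorem continuousOn_DSO_one : ContinuousOn (fun g => DSO n 1 g) (SO n) := by
  intro x hx
  have hlow : Tendsto (fun g => DSO n 1 x - DSO n g x) (𝓝[SO n] x) (𝓝 (DSO n 1 x)) := by
    simpa using ENNReal.Tendsto.sub (tendsto_const_nhds (x := DSO n 1 x)) (tendsto_DSO_left hx)
      (Or.inr ENNReal.zero_ne_top)
  have hup : Tendsto (fun g => DSO n 1 x + DSO n x g) (𝓝[SO n] x) (𝓝 (DSO n 1 x)) := by
    simpa using (tendsto_const_nhds (x := DSO n 1 x)).add (tendsto_DSO_right hx)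
  exact tendsto_of_tendsto_of_tendsto_of_le_of_le hlow hup
    (fun g => tsub_le_iff_right.mpr (DSO_triangle 1 g x)) (fun g => DSO_triangle 1 x g)

theorem DSO_one_self : DSO n 1 1 = 0 := by
  simpa using DSO_one_le (one_mem_SO (n := n)) (by simp)

theorem exists_kacRot_mul_eq_one {g : Matrix (Fin 2) (Fin 2) ℝ} (hg : g ∈ SO 2) :
    ∃ s : ℝ, kacRot 0 1 s * g = 1 := by
  have h0 := sum_row_sq hg 0
  have h1 := sum_row_sq hg 1
  have hd := hg.2
  rw [det_fin_two] at hd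
  rw [Fin.sum_univ_two] at h0 h1
  have hsq : (g 0 0 - g 1 1) ^ 2 + (g 0 1 + g 1 0) ^ 2 = 0 := by nlinarith
  have ha : g 0 0 - g 1 1 = 0 := by
    nlinarith [sq_nonneg (g 0 0 - g 1 1), sq_nonneg (g 0 1 + g 1 0)]
  have hb : g 0 1 + g 1 0 = 0 := by
    nlinarith [sq_nonneg (g 0 0 - g 1 1), sq_nonneg (g 0 1 + g 1 0)]
  have hc := Complex.norm_mul_cos_arg ⟨g 0 0, g 0 1⟩
  have hs := Complex.norm_mul_sin_arg ⟨g 0 0, g 0 1⟩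
  have hr : ‖(⟨g 0 0, g 0 1⟩ : ℂ)‖ = 1 := by
    rw [Complex.norm_eq_sqrt_sq_add_sq, h0, Real.sqrt_one]
  rw [hr, one_mul] at hc hs
  refine ⟨Complex.arg ⟨g 0 0, g 0 1⟩, ?_⟩
  have : kacRot 0 1 (Complex.arg ⟨g 0 0, g 0 1⟩) = gᵀ := by
    ext k l
    fin_cases k <;> fin_cases l <;> simp [kacRot, hc, hs] <;> linarith
  rw [this, transpose_mul_self_of_mem_SO hg]

theorem exists_eventually_sum_DSO_sq_le (hn : 2 ≤ n) {ε : ℝ≥0∞} (hε : ε ≠ 0)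
    {g₀ : Matrix (Fin n) (Fin n) ℝ} (hg₀ : g₀ ∈ SO n) :
    ∃ s : Fin n × Fin n → ℝ, ∀ᶠ g in 𝓝[SO n] g₀,
      ∑ p ∈ pairs n, DSO n 1 (kacRot p.1 p.2 (s p) * g) ^ (2 : ℝ) ≤
        ((n.choose 2 : ℝ≥0∞) - 1) * DSO n 1 g ^ (2 : ℝ) + ε := by
  suffices h : (DSO n 1 g₀ = ⊤ ∧ 2 < n) ∨ ∃ s : Fin n × Fin n → ℝ,
      ∑ p ∈ pairs n, DSO n 1 (kacRot p.1 p.2 (s p) * g₀) ^ (2 : ℝ) <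
        ((n.choose 2 : ℝ≥0∞) - 1) * DSO n 1 g₀ ^ (2 : ℝ) + ε by
    rcases h with ⟨htop, hn2⟩ | ⟨s, hs⟩
    · refine ⟨0, ?_⟩
      have hev : ∀ᶠ g in 𝓝[SO n] g₀, DSO n g g₀ < 1 :=
        (tendsto_DSO_left hg₀).eventually_lt_const one_pos
      filter_upwards [hev] with g hg
      have h1 : DSO n 1 g = ⊤ := by
        have h := DSO_triangle 1 g g₀
        rw [htop, top_le_iff, ENNReal.add_eq_top] at h
        exact h.resolve_right (hg.trans ENNReal.one_lt_top).ne
      have h3 : (1 : ℝ≥0∞) < n.choose 2 := by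
        have : 1 < n.choose 2 := lt_of_lt_of_le (by decide : 1 < Nat.choose 3 2)
          (Nat.choose_le_choose 2 hn2)
        exact_mod_cast this
      rw [h1, ENNReal.top_rpow_of_pos two_pos, ENNReal.mul_top (tsub_pos_of_lt h3).ne', top_add]
      exact le_top
    · refine ⟨s, ?_⟩
      have hl : Tendsto (fun g => ∑ p ∈ pairs n, DSO n 1 (kacRot p.1 p.2 (s p) * g) ^ (2 : ℝ))
          (𝓝[SO n] g₀) (𝓝 (∑ p ∈ pairs n, DSO n 1 (kacRot p.1 p.2 (s p) * g₀) ^ (2 : ℝ))) := by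
        refine tendsto_finsetSum _ fun p hp => ?_
        refine (ENNReal.continuous_rpow_const.tendsto _).comp ?_
        have hR := kacRot_mem_SO (ne_of_mem_pairs hp) (s p)
        exact continuousOn_DSO_one.comp
          (continuous_const.matrix_mul continuous_id).continuousOn
          (fun g hg => mul_mem_SO hR hg) g₀ hg₀
      have hr : Tendsto (fun g => ((n.choose 2 : ℝ≥0∞) - 1) * DSO n 1 g ^ (2 : ℝ) + ε)
          (𝓝[SO n] g₀) (𝓝 (((n.choose 2 : ℝ≥0∞) - 1) * DSO n 1 g₀ ^ (2 : ℝ) + ε)) := by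
        refine Tendsto.add (ENNReal.Tendsto.const_mul ?_ (Or.inr (by simp))) tendsto_const_nhds
        exact (ENNReal.continuous_rpow_const.tendsto _).comp (continuousOn_DSO_one g₀ hg₀)
      exact (hl.eventually_lt hr hs).mono fun _ h => h.le
  by_cases htop : DSO n 1 g₀ = ⊤
  · rcases hn.lt_or_eq with h | rfl
    · exact Or.inl ⟨htop, h⟩
    · right
      obtain ⟨s, hs⟩ := exists_kacRot_mul_eq_one hg₀
      refine ⟨fun _ => s, ?_⟩
      have : pairs 2 = {(0, 1)} := by decide
      rw [this, Finset.sum_singleton, hs, DSO_one_self, ENNReal.zero_rpow_of_pos two_pos]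
      exact lt_of_lt_of_le (pos_iff_ne_zero.mpr hε) le_add_self
  · exact Or.inr (exists_sum_DSO_sq_lt hn htop hε)

instance matrixBorelSpace : BorelSpace (Matrix (Fin n) (Fin n) ℝ) :=
  inferInstanceAs (BorelSpace (Fin n → Fin n → ℝ))

instance matrixSecondCountable : SecondCountableTopology (Matrix (Fin n) (Fin n) ℝ) :=
  inferInstanceAs (SecondCountableTopology (Fin n → Fin n → ℝ))

theorem measurableSet_SO : MeasurableSet (SO n) := by
  refine IsClosed.measurableSet ?_
  exact (isClosed_eq (continuous_id.matrix_mul continuous_id.matrix_transpose)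
    continuous_const).inter (isClosed_eq continuous_id.matrix_det continuous_const)

theorem exists_measurable_shift (hn : 2 ≤ n) {ε : ℝ≥0∞} (hε : ε ≠ 0) :
    ∃ S : Matrix (Fin n) (Fin n) ℝ → Fin n × Fin n → ℝ, Measurable S ∧ ∀ g ∈ SO n,
      ∑ p ∈ pairs n, DSO n 1 (kacRot p.1 p.2 (S g p) * g) ^ (2 : ℝ) ≤
        ((n.choose 2 : ℝ≥0∞) - 1) * DSO n 1 g ^ (2 : ℝ) + ε := by
  classical
  have hloc : ∀ g₀ : Matrix (Fin n) (Fin n) ℝ, ∃ (s : Fin n × Fin n → ℝ)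
      (V : Set (Matrix (Fin n) (Fin n) ℝ)), g₀ ∈ SO n → IsOpen V ∧ g₀ ∈ V ∧ ∀ g ∈ V, g ∈ SO n →
        ∑ p ∈ pairs n, DSO n 1 (kacRot p.1 p.2 (s p) * g) ^ (2 : ℝ) ≤
          ((n.choose 2 : ℝ≥0∞) - 1) * DSO n 1 g ^ (2 : ℝ) + ε := by
    intro g₀
    by_cases hg₀ : g₀ ∈ SO n
    · obtain ⟨s, hs⟩ := exists_eventually_sum_DSO_sq_le hn hε hg₀
      obtain ⟨V, hV, hmem, hsub⟩ := mem_nhdsWithin.mp hs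
      exact ⟨s, V, fun _ => ⟨hV, hmem, fun g hgV hgS => hsub ⟨hgV, hgS⟩⟩⟩
    · exact ⟨0, ∅, fun h => absurd h hg₀⟩
  choose s V hV using hloc
  obtain ⟨t, htS, htc, hcov⟩ := TopologicalSpace.countable_cover_nhdsWithin (f := V) (s := SO n)
    fun x hx => mem_nhdsWithin_of_mem_nhds ((hV x hx).1.mem_nhds (hV x hx).2.1)
  have htne : t.Nonempty := by
    obtain ⟨x, hx, -⟩ := Set.mem_iUnion₂.mp (hcov one_mem_SO)
    exact ⟨x, hx⟩
  obtain ⟨e, rfl⟩ := htc.exists_eq_range htne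
  have heS : ∀ k, e k ∈ SO n := fun k => htS (Set.mem_range_self k)
  have hex : ∀ g : Matrix (Fin n) (Fin n) ℝ, ∃ k, g ∈ V (e k) ∨ g ∉ SO n := by
    intro g
    by_cases hg : g ∈ SO n
    · obtain ⟨x, ⟨k, rfl⟩, hx⟩ := Set.mem_iUnion₂.mp (hcov hg)
      exact ⟨k, Or.inl hx⟩
    · exact ⟨0, Or.inr hg⟩
  refine ⟨fun g => s (e (Nat.find (hex g))), ?_, fun g hg => ?_⟩
  · exact Measurable.find (f := fun k _ => s (e k)) (p := fun k g => g ∈ V (e k) ∨ g ∉ SO n)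
      (fun k => measurable_const)
      (fun k => (hV _ (heS k)).1.measurableSet.union measurableSet_SO.compl) hex
  · exact (hV _ (heS _)).2.2 g ((Nat.find_spec (hex g)).resolve_right (not_not.mpr hg)) hg

end

section

theorem lintegral_Icc_add_of_periodic {f : ℝ → ℝ≥0∞} {T : ℝ} (hT : 0 < T)
    (hf : Function.Periodic f T) (s : ℝ) :
    ∫⁻ θ in Set.Icc 0 T, f (θ + s) = ∫⁻ θ in Set.Icc 0 T, f θ := by
  rw [setLIntegral_congr Ioc_ae_eq_Icc.symm, setLIntegral_congr Ioc_ae_eq_Icc.symm]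
  have h1 : ∫⁻ θ in Set.Ioc 0 T, f (θ + s) = ∫⁻ θ in Set.Ioc s (s + T), f θ := by
    have h := (measurePreserving_add_right volume s).setLIntegral_comp_preimage_emb
      (measurableEmbedding_addRight s) f (Set.Ioc s (s + T))
    rw [← h]
    congr 3
    ext θ
    simp [add_comm]
  have h2 := (isAddFundamentalDomain_Ioc hT s).setLIntegral_eq (isAddFundamentalDomain_Ioc hT 0) f
    (by
      rintro ⟨_, k, rfl⟩ x
      change f (k • T + x) = f x
      rw [add_comm]
      exact hf.zsmul k x)
  rw [h1, h2, zero_add]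

variable {X ι : Type*} [MeasurableSpace X]

/-- The kernel that picks `p ∈ s` with weight `c` each and an angle `θ` with law `l`, and then
moves `x` to `A p θ x`. -/
def mixKernel (c : ℝ≥0∞) (s : Finset ι) (A : ι → ℝ → X → X) (l : Measure ℝ) (x : X) : Measure X :=
  c • ∑ p ∈ s, l.map fun θ => A p θ x

theorem measurable_mixKernel (c : ℝ≥0∞) (s : Finset ι) {A : ι → ℝ → X → X}
    (hA : ∀ p, Measurable fun w : X × ℝ => A p w.2 w.1) (l : Measure ℝ) [SFinite l] :
    Measurable (mixKernel c s A l) := by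
  refine Measure.measurable_of_measurable_coe _ fun B hB => ?_
  simp only [mixKernel, Measure.smul_apply, Measure.finsetSum_apply, smul_eq_mul]
  refine Measurable.const_mul (Finset.measurable_sum _ fun p _ => ?_) _
  have : ∀ x : X, (l.map fun θ => A p θ x) B =
      l (Prod.mk x ⁻¹' ((fun w : X × ℝ => A p w.2 w.1) ⁻¹' B)) := fun x =>
    Measure.map_apply (f := fun θ => A p θ x) ((hA p).comp measurable_prodMk_left) hB
  simp only [this]
  exact measurable_measure_prodMk_left (hA p hB)

theorem lintegral_bind_mixKernel (c : ℝ≥0∞) (s : Finset ι) {A : ι → ℝ → X → X}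
    (hA : ∀ p, Measurable fun w : X × ℝ => A p w.2 w.1) (l : Measure ℝ) [SFinite l]
    (μ : Measure X) {f : X → ℝ≥0∞} (hf : Measurable f) :
    ∫⁻ x, f x ∂(μ.bind (mixKernel c s A l)) =
      c * ∑ p ∈ s, ∫⁻ x, ∫⁻ θ, f (A p θ x) ∂l ∂μ := by
  have hm : ∀ p, Measurable fun x => ∫⁻ θ, f (A p θ x) ∂l := fun p =>
    (hf.comp (hA p)).lintegral_prod_right'
  have hmap : ∀ (p : ι) (x : X), ∫⁻ y, f y ∂(l.map fun θ => A p θ x) = ∫⁻ θ, f (A p θ x) ∂l :=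
    fun p x => lintegral_map (g := fun θ => A p θ x) hf ((hA p).comp measurable_prodMk_left)
  rw [Measure.lintegral_bind (measurable_mixKernel c s hA l).aemeasurable hf.aemeasurable]
  simp only [mixKernel, lintegral_smul_measure, lintegral_finsetSum_measure, smul_eq_mul, hmap]
  rw [lintegral_const_mul _ (Finset.measurable_sum _ fun p _ => hm p),
    lintegral_finsetSum _ fun p _ => hm p]

/-- Couple two steps of `mixKernel` by picking the same `p`: under the law `l₁` the second
angle is the first one shifted by `σ`, under the law `l₂` the two angles agree. -/
def shiftCoupling (c : ℝ≥0∞) (s : Finset ι) (A : ι → ℝ → X → X) (l₁ l₂ : Measure ℝ)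
    (σ : X × X → ι → ℝ) (η : Measure (X × X)) : Measure (X × X) :=
  c • ∑ p ∈ s,
    ((η.prod l₁).map (fun w => (A p w.2 w.1.1, A p (w.2 + σ w.1 p) w.1.2)) +
      (η.prod l₂).map (fun w => (A p w.2 w.1.1, A p w.2 w.1.2)))

theorem isCoupling_shiftCoupling (c : ℝ≥0∞) (s : Finset ι) {A : ι → ℝ → X → X}
    (hA : ∀ p, Measurable fun w : X × ℝ => A p w.2 w.1) {T : ℝ} (hT : 0 < T)
    (hper : ∀ p x θ, A p (θ + T) x = A p θ x) {b : ℝ≥0∞}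
    {l₁ l₂ : Measure ℝ} [SFinite l₁] [SFinite l₂]
    (hl₁ : l₁ = b • volume.restrict (Set.Icc 0 T))
    {σ : X × X → ι → ℝ} (hσ : ∀ p, Measurable fun z => σ z p)
    {μ ν : Measure X} {η : Measure (X × X)} (hη : IsCoupling η μ ν) :
    IsCoupling (shiftCoupling c s A l₁ l₂ σ η) (μ.bind (mixKernel c s A (l₁ + l₂)))
      (ν.bind (mixKernel c s A (l₁ + l₂))) := by
  have hm1 : ∀ p, Measurable fun w : (X × X) × ℝ => A p w.2 w.1.1 := fun p =>
    (hA p).comp ((measurable_fst.comp measurable_fst).prodMk measurable_snd)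
  have hm2 : ∀ p, Measurable fun w : (X × X) × ℝ => A p w.2 w.1.2 := fun p =>
    (hA p).comp ((measurable_snd.comp measurable_fst).prodMk measurable_snd)
  have hm3 : ∀ p, Measurable fun w : (X × X) × ℝ => A p (w.2 + σ w.1 p) w.1.2 := fun p =>
    (hA p).comp ((measurable_snd.comp measurable_fst).prodMk
      (measurable_snd.add ((hσ p).comp measurable_fst)))
  have hinner : ∀ (p : ι) {f : X → ℝ≥0∞}, Measurable f →
      Measurable fun x => ∫⁻ θ, f (A p θ x) ∂(l₁ + l₂) := fun p f hf =>
    (hf.comp (hA p)).lintegral_prod_right'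
  constructor
  · refine Measure.ext_of_lintegral _ fun f hf => ?_
    have hf1 : Measurable fun z : X × X => f z.1 := hf.comp measurable_fst
    have hf2 : ∀ p, Measurable fun w : (X × X) × ℝ => f (A p w.2 w.1.1) := fun p => hf.comp (hm1 p)
    rw [lintegral_map hf measurable_fst, lintegral_bind_mixKernel c s hA _ μ hf, shiftCoupling,
      lintegral_smul_measure, lintegral_finsetSum_measure, smul_eq_mul]
    congr 1
    refine Finset.sum_congr rfl fun p _ => ?_
    rw [lintegral_add_measure, lintegral_map hf1 ((hm1 p).prodMk (hm3 p)),
      lintegral_map hf1 ((hm1 p).prodMk (hm2 p)), ← hη.1,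
      lintegral_map (hinner p hf) measurable_fst]
    rw [lintegral_prod _ (hf2 p).aemeasurable, lintegral_prod _ (hf2 p).aemeasurable,
      ← lintegral_add_left (hf2 p).lintegral_prod_right']
    simp only [lintegral_add_measure]
  · refine Measure.ext_of_lintegral _ fun f hf => ?_
    have hf1 : Measurable fun z : X × X => f z.2 := hf.comp measurable_snd
    have hf2 : ∀ p, Measurable fun w : (X × X) × ℝ => f (A p w.2 w.1.2) := fun p => hf.comp (hm2 p)
    have hf3 : ∀ p, Measurable fun w : (X × X) × ℝ => f (A p (w.2 + σ w.1 p) w.1.2) :=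
      fun p => hf.comp (hm3 p)
    rw [lintegral_map hf measurable_snd, lintegral_bind_mixKernel c s hA _ ν hf, shiftCoupling,
      lintegral_smul_measure, lintegral_finsetSum_measure, smul_eq_mul]
    congr 1
    refine Finset.sum_congr rfl fun p _ => ?_
    rw [lintegral_add_measure, lintegral_map hf1 ((hm1 p).prodMk (hm3 p)),
      lintegral_map hf1 ((hm1 p).prodMk (hm2 p)), ← hη.2,
      lintegral_map (hinner p hf) measurable_snd]
    rw [lintegral_prod _ (hf3 p).aemeasurable, lintegral_prod _ (hf2 p).aemeasurable,
      ← lintegral_add_left (hf3 p).lintegral_prod_right']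
    simp only [lintegral_add_measure]
    refine lintegral_congr fun z => ?_
    congr 1
    simp only [hl₁, lintegral_smul_measure]
    congr 1
    exact lintegral_Icc_add_of_periodic (f := fun θ => f (A p θ z.2)) hT
      (fun θ => congrArg f (hper p z.2 θ)) (σ z p)

/-- If the shifts contract the cost `d` on average over `s`, so does `shiftCoupling`. -/
theorem lintegral_shiftCoupling_le {c : ℝ≥0∞} {s : Finset ι} {A : ι → ℝ → X → X}
    {l₁ l₂ : Measure ℝ} [SFinite l₁] [SFinite l₂] {σ : X × X → ι → ℝ} {η : Measure (X × X)}
    [IsProbabilityMeasure η] {d : X × X → ℝ≥0∞} {e : ι → X × X → ℝ≥0∞} {k ε : ℝ≥0∞} (hk : k ≠ ⊤)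
    (h₁ : ∀ᵐ z ∂η, ∀ p ∈ s, ∀ θ, d (A p θ z.1, A p (θ + σ z p) z.2) ≤ e p z)
    (h₂ : ∀ᵐ z ∂η, ∀ p ∈ s, ∀ θ, d (A p θ z.1, A p θ z.2) ≤ d z)
    (he : ∀ᵐ z ∂η, ∑ p ∈ s, e p z ≤ k * d z + ε) (hl₁ : l₁ Set.univ ≠ ⊤) (hl₂ : l₂ Set.univ ≠ ⊤) :
    ∫⁻ z, d z ∂(shiftCoupling c s A l₁ l₂ σ η) ≤
      c * (l₁ Set.univ * (k * ∫⁻ z, d z ∂η + ε) + s.card * (l₂ Set.univ * ∫⁻ z, d z ∂η)) := by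
  have hterm₁ : ∀ p ∈ s, ∫⁻ z, d z
      ∂((η.prod l₁).map fun w => (A p w.2 w.1.1, A p (w.2 + σ w.1 p) w.1.2)) ≤
      l₁ Set.univ * ∫⁻ z, e p z ∂η := fun p hp => calc
    _ ≤ ∫⁻ w, d (A p w.2 w.1.1, A p (w.2 + σ w.1 p) w.1.2) ∂(η.prod l₁) := lintegral_map_le _ _
    _ ≤ ∫⁻ z, ∫⁻ θ, d (A p θ z.1, A p (θ + σ z p) z.2) ∂l₁ ∂η := lintegral_prod_le _
    _ ≤ ∫⁻ z, l₁ Set.univ * e p z ∂η := lintegral_mono_ae <| h₁.mono fun z hz =>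
      (lintegral_mono fun θ => hz p hp θ).trans_eq (by rw [lintegral_const, mul_comm])
    _ = _ := lintegral_const_mul' _ _ hl₁
  have hterm₂ : ∀ p ∈ s, ∫⁻ z, d z
      ∂((η.prod l₂).map fun w => (A p w.2 w.1.1, A p w.2 w.1.2)) ≤
      l₂ Set.univ * ∫⁻ z, d z ∂η := fun p hp => calc
    _ ≤ ∫⁻ w, d (A p w.2 w.1.1, A p w.2 w.1.2) ∂(η.prod l₂) := lintegral_map_le _ _
    _ ≤ ∫⁻ z, ∫⁻ θ, d (A p θ z.1, A p θ z.2) ∂l₂ ∂η := lintegral_prod_le _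
    _ ≤ ∫⁻ z, l₂ Set.univ * d z ∂η := lintegral_mono_ae <| h₂.mono fun z hz =>
      (lintegral_mono fun θ => hz p hp θ).trans_eq (by rw [lintegral_const, mul_comm])
    _ = _ := lintegral_const_mul' _ _ hl₂
  have hsum : ∑ p ∈ s, ∫⁻ z, e p z ∂η ≤ k * ∫⁻ z, d z ∂η + ε := calc
    _ ≤ ∫⁻ z, ∑ p ∈ s, e p z ∂η := by
      clear h₁ h₂ he hterm₁ hterm₂
      classical
      induction s using Finset.induction_on with
      | empty => simp
      | insert p s hp ih =>
        simp only [Finset.sum_insert hp]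
        exact (add_le_add le_rfl ih).trans (le_lintegral_add _ _)
    _ ≤ ∫⁻ z, (k * d z + ε) ∂η := lintegral_mono_ae he
    _ = _ := by
      rw [lintegral_add_right _ measurable_const, lintegral_const_mul' _ _ hk]
      simp
  rw [shiftCoupling, lintegral_smul_measure, lintegral_finsetSum_measure, smul_eq_mul]
  simp only [lintegral_add_measure]
  gcongr
  calc _ ≤ ∑ p ∈ s, (l₁ Set.univ * ∫⁻ z, e p z ∂η + l₂ Set.univ * ∫⁻ z, d z ∂η) :=
        Finset.sum_le_sum fun p hp => add_le_add (hterm₁ p hp) (hterm₂ p hp)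
    _ = l₁ Set.univ * ∑ p ∈ s, ∫⁻ z, e p z ∂η + s.card * (l₂ Set.univ * ∫⁻ z, d z ∂η) := by
      rw [Finset.sum_add_distrib, Finset.mul_sum, Finset.sum_const, nsmul_eq_mul]
    _ ≤ _ := by gcongr

end

section

variable {n : ℕ}

theorem continuous_kacRot (i j : Fin n) : Continuous (kacRot i j) := by
  refine continuous_matrix fun k l => ?_
  simp only [kacRot, of_apply]
  split_ifs <;> fun_prop

theorem measurable_kacRot_mul (i j : Fin n) :
    Measurable fun w : Matrix (Fin n) (Fin n) ℝ × ℝ => kacRot i j w.2 * w.1 :=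
  (((continuous_kacRot i j).comp continuous_snd).matrix_mul continuous_fst).measurable

theorem kacRot_periodic (i j : Fin n) : Function.Periodic (kacRot i j) (2 * Real.pi) := fun θ => by
  simp [kacRot]

theorem kacKernelRho_eq_mixKernel (ρ : ℝ → ℝ) :
    kacKernelRho n ρ = mixKernel (n.choose 2 : ℝ≥0∞)⁻¹ (pairs n)
      (fun p θ x => kacRot p.1 p.2 θ * x) (angleMeasure ρ) := rfl

/-- The part of the angle law that exceeds the uniform density `r`. -/
def excessAngleMeasure (ρ : ℝ → ℝ) (r : ℝ) : Measure ℝ :=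
  (volume.restrict (Set.Icc 0 (2 * Real.pi))).withDensity fun θ => ENNReal.ofReal (ρ θ - r)

theorem angleMeasure_eq_add {ρ : ℝ → ℝ} {r : ℝ} (hr : 0 ≤ r)
    (hρ : ∀ θ ∈ Set.Icc 0 (2 * Real.pi), r ≤ ρ θ) :
    angleMeasure ρ = ENNReal.ofReal r • volume.restrict (Set.Icc 0 (2 * Real.pi)) +
      excessAngleMeasure ρ r := by
  rw [excessAngleMeasure, ← withDensity_const, ← withDensity_add_left measurable_const]
  refine withDensity_congr_ae ((ae_restrict_mem measurableSet_Icc).mono fun θ hθ => ?_)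
  simp only [Pi.add_apply]
  rw [← ENNReal.ofReal_add hr (sub_nonneg.2 (hρ θ hθ)), add_sub_cancel]

theorem excessAngleMeasure_univ {ρ : ℝ → ℝ} {r : ℝ}
    (hρcont : ContinuousOn ρ (Set.Icc 0 (2 * Real.pi)))
    (hρint : ∫ θ in Set.Icc 0 (2 * Real.pi), ρ θ = 1)
    (hρ : ∀ θ ∈ Set.Icc 0 (2 * Real.pi), r ≤ ρ θ) :
    excessAngleMeasure ρ r Set.univ = ENNReal.ofReal (1 - 2 * Real.pi * r) ∧
      2 * Real.pi * r ≤ 1 := by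
  have hi : IntegrableOn ρ (Set.Icc 0 (2 * Real.pi)) := hρcont.integrableOn_compact isCompact_Icc
  have hc : IntegrableOn (fun _ : ℝ => r) (Set.Icc 0 (2 * Real.pi)) :=
    continuousOn_const.integrableOn_compact isCompact_Icc
  have hnn : ∀ᵐ θ ∂volume.restrict (Set.Icc 0 (2 * Real.pi)), 0 ≤ ρ θ - r :=
    (ae_restrict_mem measurableSet_Icc).mono fun θ hθ => sub_nonneg.2 (hρ θ hθ)
  have hmean : ∫ θ in Set.Icc 0 (2 * Real.pi), (ρ θ - r) = 1 - 2 * Real.pi * r := by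
    rw [integral_sub hi hc, hρint]
    simp [Real.pi_pos.le]
  constructor
  · rw [excessAngleMeasure, withDensity_apply _ MeasurableSet.univ, Measure.restrict_univ,
      ← ofReal_integral_eq_lintegral_ofReal (f := fun θ => ρ θ - r) (hi.sub hc) hnn, hmean]
  · have := integral_nonneg_of_ae hnn
    rw [hmean] at this
    linarith

theorem measurable_mul_transpose :
    Measurable fun z : Matrix (Fin n) (Fin n) ℝ × Matrix (Fin n) (Fin n) ℝ => z.2 * z.1ᵀ :=
  (continuous_snd.matrix_mul continuous_fst.matrix_transpose).measurable

theorem DSO_one_mul_transpose_le {x : Matrix (Fin n) (Fin n) ℝ} (hx : x ∈ SO n)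
    (y : Matrix (Fin n) (Fin n) ℝ) : DSO n 1 (y * xᵀ) ≤ DSO n x y := by
  have h := DSO_mul_right_le (transpose_mem_SO hx) x y
  rwa [hx.1] at h

theorem DSO_shifted_le {x y : Matrix (Fin n) (Fin n) ℝ} (hx : x ∈ SO n) {i j : Fin n} (hij : i ≠ j)
    (θ s : ℝ) : DSO n (kacRot i j θ * x) (kacRot i j (θ + s) * y) ≤
      DSO n 1 (kacRot i j s * (y * xᵀ)) := by
  have h1 := DSO_mul_left_le (kacRot_mem_SO hij θ) x (kacRot i j s * y)
  have h2 := DSO_mul_right_le hx 1 (kacRot i j s * (y * xᵀ))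
  rw [one_mul, Matrix.mul_assoc, Matrix.mul_assoc, transpose_mul_self_of_mem_SO hx,
    Matrix.mul_one] at h2
  rw [kacRot_add hij, Matrix.mul_assoc]
  exact h1.trans h2

theorem contraction_arith {N p : ℝ} (hN : 1 ≤ N) (hp0 : 0 ≤ p) (hp1 : p ≤ 1) (I ε : ℝ≥0∞) :
    (ENNReal.ofReal N)⁻¹ * (ENNReal.ofReal p * (ENNReal.ofReal (N - 1) * I + ε) +
      ENNReal.ofReal N * (ENNReal.ofReal (1 - p) * I)) ≤ ENNReal.ofReal (1 - p / N) * I + ε := by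
  have hN0 : 0 < N := by linarith
  have h1 : ENNReal.ofReal N⁻¹ * (ENNReal.ofReal p * ENNReal.ofReal (N - 1) +
      ENNReal.ofReal N * ENNReal.ofReal (1 - p)) = ENNReal.ofReal (1 - p / N) := by
    rw [← ENNReal.ofReal_mul hp0, ← ENNReal.ofReal_mul hN0.le,
      ← ENNReal.ofReal_add (mul_nonneg hp0 (by linarith)) (mul_nonneg hN0.le (by linarith)),
      ← ENNReal.ofReal_mul (inv_nonneg.2 hN0.le)]
    congr 1
    field_simp
    ring
  have h2 : ENNReal.ofReal N⁻¹ * ENNReal.ofReal p ≤ 1 := by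
    rw [← ENNReal.ofReal_mul (inv_nonneg.2 hN0.le)]
    exact ENNReal.ofReal_le_one.2 (mul_le_one₀ (inv_le_one_of_one_le₀ hN) hp0 hp1)
  rw [← ENNReal.ofReal_inv_of_pos hN0, ← h1]
  calc _ = ENNReal.ofReal N⁻¹ * (ENNReal.ofReal p * ENNReal.ofReal (N - 1) +
      ENNReal.ofReal N * ENNReal.ofReal (1 - p)) * I +
        (ENNReal.ofReal N⁻¹ * ENNReal.ofReal p) * ε := by ring
    _ ≤ _ := by
      gcongr
      exact mul_le_of_le_one_left zero_le h2

/-- Every coupling `η` can be propagated one step so that the mean squared distance contracts, up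
to an arbitrarily small error. -/
theorem exists_coupling_kacKernelRho (hn : 2 ≤ n) {ρ : ℝ → ℝ}
    (hρcont : ContinuousOn ρ (Set.Icc 0 (2 * Real.pi)))
    (hρint : ∫ θ in Set.Icc 0 (2 * Real.pi), ρ θ = 1) {r : ℝ} (hr : 0 ≤ r)
    (hρ : ∀ θ ∈ Set.Icc 0 (2 * Real.pi), r ≤ ρ θ)
    {μ ν : Measure (Matrix (Fin n) (Fin n) ℝ)} [IsProbabilityMeasure μ]
    (hμSO : μ (SO n)ᶜ = 0) (hνSO : ν (SO n)ᶜ = 0)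
    {η : Measure (Matrix (Fin n) (Fin n) ℝ × Matrix (Fin n) (Fin n) ℝ)} (hη : IsCoupling η μ ν)
    {ε : ℝ≥0∞} (hε : ε ≠ 0) :
    ∃ η', IsCoupling η' (μ.bind (kacKernelRho n ρ)) (ν.bind (kacKernelRho n ρ)) ∧
      ∫⁻ z, DSO n z.1 z.2 ^ (2 : ℝ) ∂η' ≤
        ENNReal.ofReal (1 - 2 * Real.pi * r / (n.choose 2 : ℝ)) *
          ∫⁻ z, DSO n z.1 z.2 ^ (2 : ℝ) ∂η + ε := by
  obtain ⟨S, hS, hSle⟩ := exists_measurable_shift hn hε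
  obtain ⟨hmass, hr1⟩ := excessAngleMeasure_univ hρcont hρint hρ
  have : IsFiniteMeasure (excessAngleMeasure ρ r) := ⟨by rw [hmass]; exact ENNReal.ofReal_lt_top⟩
  have : IsProbabilityMeasure η := by
    refine ⟨?_⟩
    have h : (η.map Prod.fst) Set.univ = 1 := by rw [hη.1]; exact measure_univ
    rwa [Measure.map_apply measurable_fst MeasurableSet.univ] at h
  have hx : ∀ᵐ z ∂η, z.1 ∈ SO n :=
    ae_of_ae_map measurable_fst.aemeasurable (by rw [hη.1]; exact hμSO)
  have hy : ∀ᵐ z ∂η, z.2 ∈ SO n :=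
    ae_of_ae_map measurable_snd.aemeasurable (by rw [hη.2]; exact hνSO)
  set l₁ : Measure ℝ := ENNReal.ofReal r • volume.restrict (Set.Icc 0 (2 * Real.pi)) with hl₁
  have hmass₁ : l₁ Set.univ = ENNReal.ofReal (2 * Real.pi * r) := by
    rw [hl₁, Measure.smul_apply, Measure.restrict_apply_univ, Real.volume_Icc, sub_zero, smul_eq_mul,
      ← ENNReal.ofReal_mul hr, mul_comm]
  have : IsFiniteMeasure l₁ := ⟨by rw [hmass₁]; exact ENNReal.ofReal_lt_top⟩
  have hN : (1 : ℝ) ≤ n.choose 2 := one_le_choose_two hn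
  have hN1 : (n.choose 2 : ℝ≥0∞) - 1 = ENNReal.ofReal ((n.choose 2 : ℝ) - 1) := by
    rw [ENNReal.ofReal_sub _ zero_le_one, ENNReal.ofReal_natCast, ENNReal.ofReal_one]
  refine ⟨shiftCoupling (n.choose 2 : ℝ≥0∞)⁻¹ (pairs n) (fun p θ x => kacRot p.1 p.2 θ * x) l₁
    (excessAngleMeasure ρ r) (fun z => S (z.2 * z.1ᵀ)) η, ?_, ?_⟩
  · rw [kacKernelRho_eq_mixKernel, angleMeasure_eq_add hr hρ]
    refine isCoupling_shiftCoupling _ _ (fun p => measurable_kacRot_mul p.1 p.2) Real.two_pi_pos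
      (fun p x θ => ?_) hl₁ (fun p => ?_) hη
    · rw [kacRot_periodic p.1 p.2 θ]
    · exact (measurable_pi_apply p).comp (hS.comp measurable_mul_transpose)
  · have h := lintegral_shiftCoupling_le (c := (n.choose 2 : ℝ≥0∞)⁻¹) (s := pairs n)
      (A := fun p θ x => kacRot p.1 p.2 θ * x) (l₁ := l₁) (l₂ := excessAngleMeasure ρ r)
      (σ := fun z => S (z.2 * z.1ᵀ)) (η := η) (d := fun z => DSO n z.1 z.2 ^ (2 : ℝ))
      (e := fun p z => DSO n 1 (kacRot p.1 p.2 (S (z.2 * z.1ᵀ) p) * (z.2 * z.1ᵀ)) ^ (2 : ℝ))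
      (k := (n.choose 2 : ℝ≥0∞) - 1) (ε := ε) (by rw [hN1]; exact ENNReal.ofReal_ne_top)
      (hx.mono fun z hz p hp θ => ENNReal.rpow_le_rpow
        (DSO_shifted_le hz (ne_of_mem_pairs hp) θ _) zero_le_two)
      (ae_of_all _ fun z p hp θ => ENNReal.rpow_le_rpow
        (DSO_mul_left_le (kacRot_mem_SO (ne_of_mem_pairs hp) θ) _ _) zero_le_two)
      (by
        filter_upwards [hx, hy] with z hz1 hz2
        refine (hSle _ (mul_mem_SO hz2 (transpose_mem_SO hz1))).trans ?_
        gcongr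
        exact DSO_one_mul_transpose_le hz1 z.2)
      (measure_ne_top _ _) (measure_ne_top _ _)
    refine h.trans ?_
    rw [hmass, hmass₁, hN1, card_pairs, ← ENNReal.ofReal_natCast]
    exact contraction_arith hN (by positivity) hr1 _ _

theorem wassersteinE_kacKernelRho_le (hn : 2 ≤ n) {ρ : ℝ → ℝ}
    (hρcont : ContinuousOn ρ (Set.Icc 0 (2 * Real.pi)))
    (hρint : ∫ θ in Set.Icc 0 (2 * Real.pi), ρ θ = 1) {r : ℝ} (hr : 0 ≤ r)
    (hρ : ∀ θ ∈ Set.Icc 0 (2 * Real.pi), r ≤ ρ θ)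
    {μ ν : Measure (Matrix (Fin n) (Fin n) ℝ)} [IsProbabilityMeasure μ]
    (hμSO : μ (SO n)ᶜ = 0) (hνSO : ν (SO n)ᶜ = 0)
    {η : Measure (Matrix (Fin n) (Fin n) ℝ × Matrix (Fin n) (Fin n) ℝ)} (hη : IsCoupling η μ ν) :
    wassersteinE (DSO n) 2 (μ.bind (kacKernelRho n ρ)) (ν.bind (kacKernelRho n ρ)) ≤
      ENNReal.ofReal (Real.sqrt (1 - 2 * Real.pi * r / (n.choose 2 : ℝ))) *
        (∫⁻ z, DSO n z.1 z.2 ^ (2 : ℝ) ∂η) ^ (1 / 2 : ℝ) := by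
  set W := wassersteinE (DSO n) 2 (μ.bind (kacKernelRho n ρ)) (ν.bind (kacKernelRho n ρ)) with hW
  have hnn : 0 ≤ 1 - 2 * Real.pi * r / (n.choose 2 : ℝ) := by
    have hN := one_le_choose_two hn
    rw [sub_nonneg, div_le_one (by linarith)]
    exact (excessAngleMeasure_univ hρcont hρint hρ).2.trans hN
  have hsq : W ^ (2 : ℝ) ≤ ENNReal.ofReal (1 - 2 * Real.pi * r / (n.choose 2 : ℝ)) *
      ∫⁻ z, DSO n z.1 z.2 ^ (2 : ℝ) ∂η := by
    refine ENNReal.le_of_forall_pos_le_add fun ε hε _ => ?_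
    obtain ⟨η', hη', hle⟩ := exists_coupling_kacKernelRho hn hρcont hρint hr hρ hμSO hνSO hη
      (ENNReal.coe_ne_zero.2 hε.ne')
    refine le_trans ?_ hle
    have h : W ≤ (∫⁻ z, DSO n z.1 z.2 ^ (2 : ℝ) ∂η') ^ (1 / 2 : ℝ) := iInf₂_le η' hη'
    calc W ^ (2 : ℝ) ≤ ((∫⁻ z, DSO n z.1 z.2 ^ (2 : ℝ) ∂η') ^ (1 / 2 : ℝ)) ^ (2 : ℝ) :=
          ENNReal.rpow_le_rpow h zero_le_two
      _ = _ := by rw [← ENNReal.rpow_mul]; norm_num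
  calc W = (W ^ (2 : ℝ)) ^ (1 / 2 : ℝ) := by rw [← ENNReal.rpow_mul]; norm_num
    _ ≤ _ := ENNReal.rpow_le_rpow hsq (by norm_num)
    _ = _ := by
      rw [ENNReal.mul_rpow_of_nonneg _ _ (by norm_num), Real.sqrt_eq_rpow,
        ENNReal.ofReal_rpow_of_nonneg hnn (by norm_num)]

end

/-- The kernel `K^{(ρ)}` of Kac's walk with angle density `ρ ≥ ρ_min > 0` is
`√(1 - 2π ρ_min/C(n,2))`-contracting in the `L²` Wasserstein metric for the intrinsic
metric `D` on `SO(n)`. -/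
theorem kac_walk_nonuniform_contracting (n : ℕ) (hn : 2 ≤ n)
    (ρ : ℝ → ℝ) (hρcont : ContinuousOn ρ (Set.Icc 0 (2 * Real.pi)))
    (hρint : ∫ θ in Set.Icc 0 (2 * Real.pi), ρ θ = 1)
    (ρmin : ℝ) (hρleast : IsLeast (ρ '' Set.Icc 0 (2 * Real.pi)) ρmin) (hρ0 : 0 < ρmin)
    (μ ν : Measure (Matrix (Fin n) (Fin n) ℝ))
    (hμprob : IsProbabilityMeasure μ) (hνprob : IsProbabilityMeasure ν)
    (hμSO : μ (SO n)ᶜ = 0) (hνSO : ν (SO n)ᶜ = 0) :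
    wassersteinE (DSO n) 2 (μ.bind (kacKernelRho n ρ)) (ν.bind (kacKernelRho n ρ)) ≤
      ENNReal.ofReal (Real.sqrt (1 - 2 * Real.pi * ρmin / (n.choose 2 : ℝ))) *
        wassersteinE (DSO n) 2 μ ν := by
  have hle : ∀ η, IsCoupling η μ ν → _ := fun η hη =>
    wassersteinE_kacKernelRho_le hn hρcont hρint hρ0.le
      (fun θ hθ => hρleast.2 (Set.mem_image_of_mem ρ hθ)) hμSO hνSO hη
  by_cases hc : ENNReal.ofReal (Real.sqrt (1 - 2 * Real.pi * ρmin / (n.choose 2 : ℝ))) = 0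
  · have h := hle (μ.prod ν) ⟨by simp, by simp⟩
    rw [hc, zero_mul] at h ⊢
    exact h
  · conv_rhs => rw [wassersteinE]
    simp only [ENNReal.mul_iInf_of_ne hc ENNReal.ofReal_ne_top]
    exact le_iInf₂ hle

end
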